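/- For every ε > 0 and every r ∈ (1,2) there are constants C > 0 and C' > 0 such that for every integer y ≥ 1 there is an integer N_{r,y} with: for all b with gcd(b,y) = 1, every real Q ≥ 1, and every finite set F ⊂ ℤ, one has ‖ sup | Lo_{N,y,Q} ∗ 1_F | ‖_{ℓ^r(ℤ)} ≤ C · Q^ε · |F|^{1/r}, where the supremum is over dyadic integers N = 2^n with N > N_{r,y} and Q < (log N)^{C' r'} (r' = r/(r−1)). -/

import Mathlib

open scoped ENNReal

noncomputable section

/-- `e(t) = e^{2πit}`. -/
def e2pi (t : ℝ) : ℂ := Complex.exp (2 * Real.pi * Complex.I * t)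

/-- For real `x > 0`, `M̂_x(θ) = (1/x) Σ_{0 ≤ n < x} e(-nθ)`. -/
def Mhat (x θ : ℝ) : ℂ :=
  ((1 / x : ℝ) : ℂ) * ∑ n ∈ Finset.range ⌈x⌉₊, e2pi (-(n * θ))

/-- The Gauss-type sum `Υ(a,q)`. -/
def Ups (y : ℕ) (b : ℤ) (a : ℤ) (q : ℕ) : ℂ :=
  ((Nat.totient y : ℂ) / (Nat.totient (Nat.lcm y q) : ℂ)) *
    ∑ r ∈ (Finset.Icc 1 q).filter
        (fun r : ℕ => Nat.gcd r q = 1 ∧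
          (r : ℤ) % (Nat.gcd y q : ℤ) = b % (Nat.gcd y q : ℤ)),
      e2pi (-((((r : ℤ) * a : ℤ) : ℝ) / (q : ℝ)))

/-- The Ramanujan height `h_y(q)` of `q` relative to `y`. -/
def hgt (y q : ℕ) : ℕ :=
  if 1 < Nat.gcd y q ∧ Nat.gcd y q < q ∧ 1 < Nat.gcd (Nat.gcd y q) (q / Nat.gcd y q) then 0
  else Nat.lcm y q / y

/-- The multiplier piece `L̂^{a,q}_{N,y}(ξ) = Υ(a,q) M̂_{N/ℓ}(ℓ(ξ-a/q)) χ(ℓ²(ξ-a/q))`. -/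
def Lhat (χ : ℝ → ℝ) (y : ℕ) (b : ℤ) (N : ℝ) (a q : ℕ) (ξ : ℝ) : ℂ :=
  Ups y b (a : ℤ) q *
    Mhat (N / (Nat.lcm y q : ℝ)) ((Nat.lcm y q : ℝ) * (ξ - (a : ℝ) / (q : ℝ))) *
    ((χ ((Nat.lcm y q : ℝ) ^ 2 * (ξ - (a : ℝ) / (q : ℝ))) : ℝ) : ℂ)

/-- The kernel `L^{a,q}_{N,y}(x) = ∫₀¹ L̂^{a,q}_{N,y}(ξ) e(xξ) dξ`. -/
def Lker (χ : ℝ → ℝ) (y : ℕ) (b : ℤ) (N : ℝ) (a q : ℕ) (x : ℤ) : ℂ :=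
  ∫ ξ in (0:ℝ)..1, Lhat χ y b N a q ξ * e2pi ((x : ℝ) * ξ)


/-- The Low kernel `Lo_{N,y,Q} = Σ_{q : h_y(q) < Q} Σ_{a ∈ A_q} L^{a,q}_{N,y}`
(a finite sum, since `h_y(q) < Q` forces `q ≤ yQ`). -/
def LoK (χ : ℝ → ℝ) (y : ℕ) (b : ℤ) (N : ℕ) (Q : ℝ) (x : ℤ) : ℂ :=
  ∑ q ∈ (Finset.Icc 1 (y * ⌈Q⌉₊)).filter (fun q : ℕ => (hgt y q : ℝ) < Q),
    ∑ a ∈ (Finset.Icc 1 q).filter (fun a : ℕ => Nat.gcd a q = 1),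
      Lker χ y b (N : ℝ) a q x

/-- `(Lo_{N,y,Q} ∗ 1_F)(x)`. -/
def LoConv (χ : ℝ → ℝ) (y : ℕ) (b : ℤ) (N : ℕ) (Q : ℝ) (F : Finset ℤ) (x : ℤ) : ℂ :=
  ∑ z ∈ F, LoK χ y b N Q (x - z)

/-- The one-sided maximal average of `g` along the progression of step `l`. -/
def avgMax (l : ℕ) (g : ℤ → ℝ≥0∞) (x : ℤ) : ℝ≥0∞ :=
  ⨆ n : ℕ, (∑ i ∈ Finset.range (n + 1), g (x - l * i)) / ((n + 1 : ℕ) : ℝ≥0∞)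

lemma lt_avgMax_iff {l : ℕ} {g : ℤ → ℝ≥0∞} {x : ℤ} {t : ℝ≥0∞} :
    t < avgMax l g x ↔
      ∃ n : ℕ, t * ((n + 1 : ℕ) : ℝ≥0∞) < ∑ i ∈ Finset.range (n + 1), g (x - l * i) := by
  simp only [avgMax, lt_iSup_iff]
  refine exists_congr fun n => ?_
  rw [ENNReal.lt_div_iff_mul_lt] <;> simp

/-- The weak-type (1,1) inequality, in the form obtained by greedily selecting progressions. -/
lemma mul_card_le_tsum_of_lt_avgMax {l : ℕ} (hl : 0 < l) (g : ℤ → ℝ≥0∞) (t : ℝ≥0∞)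
    (E : Finset ℤ) (hE : ∀ x ∈ E, t < avgMax l g x) :
    t * (E.card : ℝ≥0∞) ≤
      ∑' u : ℤ, {u : ℤ | ∃ x ∈ E, ∃ i : ℕ, u = x - l * i}.indicator g u := by
  induction E using Finset.strongInduction with
  | H E ih =>
    rcases E.eq_empty_or_nonempty with rfl | hne
    · simp
    obtain ⟨x, hxE, hmax⟩ : ∃ x ∈ E, ∀ y ∈ E, y ≤ x :=
      ⟨E.max' hne, E.max'_mem hne, fun y hy => E.le_max' y hy⟩
    obtain ⟨n, hn⟩ := lt_avgMax_iff.1 (hE x hxE)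
    have hinj : Set.InjOn (fun i : ℕ => x - (l : ℤ) * i) (Finset.range (n + 1)) := by
      intro i _ j _ h
      have : (l : ℤ) * i = l * j := by simpa using h
      have hl' : (l : ℤ) ≠ 0 := by exact_mod_cast hl.ne'
      exact_mod_cast mul_left_cancel₀ hl' this
    set I : Finset ℤ := (Finset.range (n + 1)).image fun i : ℕ => x - (l : ℤ) * i with hI
    have hxI : x ∈ I := Finset.mem_image.2 ⟨0, by simp, by simp⟩
    have hIcard : I.card = n + 1 := by
      rw [hI, Finset.card_image_of_injOn hinj, Finset.card_range]
    have hss : E \ I ⊂ E := by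
      refine Finset.ssubset_iff_subset_ne.2 ⟨Finset.sdiff_subset, fun h => ?_⟩
      have : x ∈ E \ I := by rw [h]; exact hxE
      exact (Finset.mem_sdiff.1 this).2 hxI
    have ih' := ih (E \ I) hss fun y hy => hE y (Finset.mem_sdiff.1 hy).1
    have hcard : E.card ≤ (n + 1) + (E \ I).card := by
      have := Finset.card_le_card_sdiff_add_card (s := E) (t := I)
      omega
    have hsum : ∑ i ∈ Finset.range (n + 1), g (x - l * i) =
        ∑' u : ℤ, (I : Set ℤ).indicator g u := by
      rw [← tsum_subtype, Finset.tsum_subtype', hI, Finset.sum_image hinj]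
    calc t * (E.card : ℝ≥0∞)
        ≤ t * (((n + 1 : ℕ) : ℝ≥0∞) + ((E \ I).card : ℝ≥0∞)) := by
          gcongr; exact_mod_cast hcard
      _ = t * ((n + 1 : ℕ) : ℝ≥0∞) + t * ((E \ I).card : ℝ≥0∞) := mul_add _ _ _
      _ ≤ ∑' u : ℤ, (I : Set ℤ).indicator g u +
            ∑' u : ℤ, {u : ℤ | ∃ x ∈ E \ I, ∃ i : ℕ, u = x - l * i}.indicator g u := by
          rw [← hsum]; exact add_le_add hn.le ih'
      _ = ∑' u : ℤ, ((I : Set ℤ).indicator g u +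
            {u : ℤ | ∃ x ∈ E \ I, ∃ i : ℕ, u = x - l * i}.indicator g u) :=
          (ENNReal.tsum_add).symm
      _ ≤ _ := by
          refine ENNReal.tsum_le_tsum fun u => ?_
          by_cases hu : u ∈ I
          · have h2 : u ∉ {u : ℤ | ∃ x ∈ E \ I, ∃ i : ℕ, u = x - l * i} := by
              rintro ⟨y, hy, j, hj⟩
              obtain ⟨hyE, hyI⟩ := Finset.mem_sdiff.1 hy
              obtain ⟨i, hi, hiu⟩ := Finset.mem_image.1 hu
              apply hyI
              have hyx := hmax y hyE
              have hle : j ≤ i := by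
                have h3 : (l : ℤ) * j ≤ l * i := by linarith
                exact_mod_cast le_of_mul_le_mul_left h3 (by exact_mod_cast hl)
              refine Finset.mem_image.2 ⟨i - j, ?_, ?_⟩
              · have := Finset.mem_range.1 hi
                exact Finset.mem_range.2 (by omega)
              · push_cast [hle]; linarith
            have h1 : u ∈ {u : ℤ | ∃ x ∈ E, ∃ i : ℕ, u = x - l * i} := by
              obtain ⟨i, hi, hiu⟩ := Finset.mem_image.1 hu
              exact ⟨x, hxE, i, hiu.symm⟩
            rw [Set.indicator_of_mem (by exact_mod_cast hu), Set.indicator_of_notMem h2,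
              Set.indicator_of_mem h1, add_zero]
          · rw [Set.indicator_of_notMem (by exact_mod_cast hu), zero_add]
            refine Set.indicator_le_indicator_of_subset ?_ (fun _ => zero_le) u
            rintro v ⟨y, hy, j, hj⟩
            exact ⟨y, (Finset.mem_sdiff.1 hy).1, j, hj⟩

lemma avgMax_add_le (l : ℕ) (g h : ℤ → ℝ≥0∞) (x : ℤ) :
    avgMax l (fun u => g u + h u) x ≤ avgMax l g x + avgMax l h x := by
  refine iSup_le fun n => ?_
  rw [Finset.sum_add_distrib, ENNReal.add_div]
  exact add_le_add (le_iSup (fun n : ℕ => (∑ i ∈ Finset.range (n + 1), g (x - l * i)) /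
    ((n + 1 : ℕ) : ℝ≥0∞)) n) (le_iSup (fun n : ℕ => (∑ i ∈ Finset.range (n + 1), h (x - l * i)) /
    ((n + 1 : ℕ) : ℝ≥0∞)) n)

lemma avgMax_le_of_le {l : ℕ} {g : ℤ → ℝ≥0∞} {t : ℝ≥0∞} (h : ∀ u, g u ≤ t) (x : ℤ) :
    avgMax l g x ≤ t := by
  refine iSup_le fun n => ENNReal.div_le_of_le_mul ?_
  calc ∑ i ∈ Finset.range (n + 1), g (x - l * i) ≤ ∑ i ∈ Finset.range (n + 1), t :=
        Finset.sum_le_sum fun i _ => h _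
    _ = t * ((n + 1 : ℕ) : ℝ≥0∞) := by simp [mul_comm]

/-- The truncated weak-type inequality. -/
lemma mul_tsum_indicator_lt_avgMax_le {l : ℕ} (hl : 0 < l) (g : ℤ → ℝ≥0∞) (t : ℝ≥0∞) :
    t * ∑' x : ℤ, {x : ℤ | t + t < avgMax l g x}.indicator (fun _ => (1 : ℝ≥0∞)) x ≤
      ∑' u : ℤ, {u : ℤ | t < g u}.indicator g u := by
  rw [← ENNReal.tsum_mul_left, ENNReal.tsum_eq_iSup_sum]
  refine iSup_le fun s => ?_
  classical
  have h1 : ∑ x ∈ s, t * {x : ℤ | t + t < avgMax l g x}.indicator (fun _ => (1 : ℝ≥0∞)) x =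
      t * ((s.filter fun x => t + t < avgMax l g x).card : ℝ≥0∞) := by
    rw [← Finset.mul_sum, Finset.card_filter]
    push_cast
    simp [Set.indicator_apply]
  rw [h1]
  refine (mul_card_le_tsum_of_lt_avgMax hl ({u : ℤ | t < g u}.indicator g) t _ ?_).trans ?_
  · intro x hx
    have hx' := (Finset.mem_filter.1 hx).2
    have h2 : avgMax l g x ≤ avgMax l ({u : ℤ | t < g u}.indicator g) x + t := by
      have h3 : g = fun u =>
          {u : ℤ | t < g u}.indicator g u + {u : ℤ | t < g u}ᶜ.indicator g u := by
        funext u; exact (Set.indicator_self_add_compl_apply _ g u).symm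
      conv_lhs => rw [h3]
      refine (avgMax_add_le _ _ _ _).trans ?_
      gcongr
      refine avgMax_le_of_le (fun u => ?_) x
      by_cases hu : t < g u
      · rw [Set.indicator_of_notMem (by simpa using hu)]; exact zero_le
      · rw [Set.indicator_of_mem (by simpa using hu)]; exact not_lt.1 hu
    have h4 := hx'.trans_le h2
    by_contra h5
    exact absurd h4 (not_lt.2 (by gcongr; exact not_lt.1 h5))
  · refine ENNReal.tsum_le_tsum fun u => ?_
    exact Set.indicator_le_self _ _ _

open MeasureTheory in
lemma lintegral_Ioi_rpow_indicator {p : ℝ} (hp : 0 < p) {a : ℝ≥0∞} (ha : a ≠ ∞) :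
    ∫⁻ t in Set.Ioi (0 : ℝ), ENNReal.ofReal (t ^ (p - 1)) *
      {t : ℝ | ENNReal.ofReal t < a}.indicator (fun _ => (1 : ℝ≥0∞)) t =
      ENNReal.ofReal (1 / p) * a ^ p := by
  lift a to NNReal using ha
  have h1 : ∀ t ∈ Set.Ioi (0 : ℝ), ENNReal.ofReal (t ^ (p - 1)) *
      {t : ℝ | ENNReal.ofReal t < a}.indicator (fun _ => (1 : ℝ≥0∞)) t =
      (Set.Iio (a : ℝ)).indicator (fun t => ENNReal.ofReal (t ^ (p - 1))) t := by
    intro t ht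
    have : ENNReal.ofReal t < a ↔ t < a := by
      rw [← ENNReal.ofReal_coe_nnreal, ENNReal.ofReal_lt_ofReal_iff']
      exact ⟨fun h => h.1, fun h => ⟨h, lt_trans ht h⟩⟩
    simp [Set.indicator_apply, this]
  rw [setLIntegral_congr_fun measurableSet_Ioi h1, lintegral_indicator measurableSet_Iio,
    Measure.restrict_restrict measurableSet_Iio, Set.inter_comm, Set.Ioi_inter_Iio,
    restrict_Ioo_eq_restrict_Ioc]
  have hint : IntervalIntegrable (fun t : ℝ => t ^ (p - 1)) volume 0 a :=
    intervalIntegral.intervalIntegrable_rpow' (by linarith)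
  rw [← ofReal_integral_eq_lintegral_ofReal
    ((intervalIntegrable_iff_integrableOn_Ioc_of_le a.coe_nonneg).1 hint)]
  · rw [← intervalIntegral.integral_of_le a.coe_nonneg, integral_rpow (Or.inl (by linarith)),
      sub_add_cancel, Real.zero_rpow hp.ne', sub_zero, div_eq_mul_one_div, mul_comm,
      ENNReal.ofReal_mul (by positivity)]
    congr 1
    rw [← ENNReal.ofReal_rpow_of_nonneg a.coe_nonneg hp.le, ENNReal.ofReal_coe_nnreal]
  · filter_upwards [ae_restrict_mem measurableSet_Ioc] with t ht
    exact Real.rpow_nonneg ht.1.le _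

open MeasureTheory in
/-- The maximal inequality on `ℓ^r(ℤ)`, with constant independent of the step. -/
lemma tsum_avgMax_rpow_le {l : ℕ} (hl : 0 < l) {r : ℝ} (hr : 1 < r) (g : ℤ → ℝ≥0∞) :
    ∑' x, avgMax l g x ^ r ≤ ENNReal.ofReal (2 ^ r * r / (r - 1)) * ∑' x, g x ^ r := by
  have hr0 : 0 < r := by linarith
  have hr1 : 0 < r - 1 := by linarith
  by_cases hfin : ∑' x, g x ^ r = ∞
  · rw [hfin, ENNReal.mul_top]
    · exact le_top
    · simp only [ne_eq, ENNReal.ofReal_eq_zero, not_le]; positivity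
  have hgB : ∀ u, g u ≤ (∑' x, g x ^ r) ^ (1 / r) := fun u => by
    calc g u = (g u ^ r) ^ (1 / r) := by
          rw [← ENNReal.rpow_mul, mul_one_div_cancel hr0.ne', ENNReal.rpow_one]
      _ ≤ _ := by gcongr; exact ENNReal.le_tsum u
  have hB : (∑' x, g x ^ r) ^ (1 / r) ≠ ∞ := ENNReal.rpow_ne_top_of_nonneg (by positivity) hfin
  have hg : ∀ u, g u ≠ ∞ := fun u => ne_top_of_le_ne_top hB (hgB u)
  have hM : ∀ x, avgMax l g x ≠ ∞ := fun x => ne_top_of_le_ne_top hB (avgMax_le_of_le hgB x)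
  have hmeas' : ∀ a : ℝ≥0∞, Measurable fun t : ℝ =>
      {t : ℝ | ENNReal.ofReal t < a}.indicator (fun _ => (1 : ℝ≥0∞)) t := fun a =>
    measurable_const.indicator (measurableSet_lt ENNReal.measurable_ofReal measurable_const)
  have hmeas : ∀ (s : ℝ) (a : ℝ≥0∞), Measurable fun t : ℝ => ENNReal.ofReal (t ^ s) *
      {t : ℝ | ENNReal.ofReal t < a}.indicator (fun _ => (1 : ℝ≥0∞)) t := fun s a =>
    (measurable_id.pow_const s).ennreal_ofReal.mul (hmeas' a)
  have e1 : ∀ x, avgMax l g x ^ r = ENNReal.ofReal (2 ^ r * r) *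
      ∫⁻ t in Set.Ioi (0 : ℝ), ENNReal.ofReal (t ^ (r - 1)) *
        {t : ℝ | ENNReal.ofReal t < avgMax l g x / 2}.indicator (fun _ => (1 : ℝ≥0∞)) t := by
    intro x
    rw [lintegral_Ioi_rpow_indicator hr0 (ENNReal.div_ne_top (hM x) two_ne_zero),
      ENNReal.div_rpow_of_nonneg _ _ hr0.le, ← mul_assoc, ← ENNReal.ofReal_mul (by positivity),
      mul_assoc, mul_one_div_cancel hr0.ne', mul_one,
      ← ENNReal.ofReal_rpow_of_pos two_pos, ENNReal.ofReal_ofNat, mul_comm,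
      ENNReal.div_mul_cancel] <;> simp
  have e2 : ∀ u, g u * ∫⁻ t in Set.Ioi (0 : ℝ), ENNReal.ofReal (t ^ (r - 1 - 1)) *
        {t : ℝ | ENNReal.ofReal t < g u}.indicator (fun _ => (1 : ℝ≥0∞)) t =
      ENNReal.ofReal (1 / (r - 1)) * g u ^ r := by
    intro u
    rw [lintegral_Ioi_rpow_indicator hr1 (hg u), mul_left_comm]
    congr 1
    by_cases h0 : g u = 0
    · simp [h0, hr0]
    · conv_lhs => rw [← ENNReal.rpow_one (g u)]
      rw [ENNReal.rpow_one, mul_comm]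
      nth_rw 2 [← ENNReal.rpow_one (g u)]
      rw [← ENNReal.rpow_add _ _ h0 (hg u), sub_add_cancel]
  calc ∑' x, avgMax l g x ^ r
      = ENNReal.ofReal (2 ^ r * r) * ∫⁻ t in Set.Ioi (0 : ℝ), ENNReal.ofReal (t ^ (r - 1)) *
          ∑' x, {t : ℝ | ENNReal.ofReal t < avgMax l g x / 2}.indicator
            (fun _ => (1 : ℝ≥0∞)) t := by
        simp_rw [e1, ENNReal.tsum_mul_left,
          ← ENNReal.tsum_mul_left (a := ENNReal.ofReal (_ ^ (r - 1)))]
        rw [lintegral_tsum fun x => (hmeas _ _).aemeasurable]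
    _ ≤ ENNReal.ofReal (2 ^ r * r) * ∫⁻ t in Set.Ioi (0 : ℝ), ∑' u, g u *
          (ENNReal.ofReal (t ^ (r - 1 - 1)) *
            {t : ℝ | ENNReal.ofReal t < g u}.indicator (fun _ => (1 : ℝ≥0∞)) t) := by
        refine mul_le_mul_right ?_ _
        refine setLIntegral_mono' measurableSet_Ioi fun t ht => ?_
        have ht0 : (0 : ℝ) < t := ht
        have h1 : ENNReal.ofReal (t ^ (r - 1)) =
            ENNReal.ofReal (t ^ (r - 1 - 1)) * ENNReal.ofReal t := by
          rw [← ENNReal.ofReal_mul (by positivity), ← Real.rpow_add_one ht0.ne', sub_add_cancel]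
        have h2 := mul_tsum_indicator_lt_avgMax_le hl g (ENNReal.ofReal t)
        have h3 : ∀ x, {t : ℝ | ENNReal.ofReal t < avgMax l g x / 2}.indicator
            (fun _ => (1 : ℝ≥0∞)) t = {x : ℤ | ENNReal.ofReal t + ENNReal.ofReal t <
              avgMax l g x}.indicator (fun _ => (1 : ℝ≥0∞)) x := by
          intro x
          have : ENNReal.ofReal t < avgMax l g x / 2 ↔
              ENNReal.ofReal t + ENNReal.ofReal t < avgMax l g x := by
            rw [ENNReal.lt_div_iff_mul_lt (by simp) (by simp), mul_two]
          simp [Set.indicator_apply, this]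
        simp_rw [h3]
        rw [h1, mul_assoc]
        refine (mul_le_mul_right h2 _).trans ?_
        rw [← ENNReal.tsum_mul_left]
        refine (ENNReal.tsum_le_tsum fun u => ?_)
        by_cases hu : ENNReal.ofReal t < g u
        · simp [hu, mul_comm]
        · simp [hu]
    _ = ENNReal.ofReal (2 ^ r * r) * ∑' u, ENNReal.ofReal (1 / (r - 1)) * g u ^ r := by
        rw [lintegral_tsum fun u => ((hmeas _ _).const_mul _).aemeasurable]
        congr 1
        refine tsum_congr fun u => ?_
        rw [lintegral_const_mul _ (hmeas _ _), e2]
    _ = _ := by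
        rw [ENNReal.tsum_mul_left, ← mul_assoc, ← ENNReal.ofReal_mul (by positivity),
          mul_one_div]

/-- The sum of simple poles `u ↦ ∑ 1/(u - z)` over `z ∈ F`. -/
def poleSum (F : Finset ℤ) (u : ℝ) : ℝ := ∑ z ∈ F, (u - z)⁻¹

lemma one_half_le_abs_sub_int {z w : ℤ} (h : z ≠ w) {u : ℝ} (hu : |u - z| ≤ 1 / 2) :
    1 / 2 ≤ |u - w| := by
  have h1 : (1 : ℝ) ≤ |(z : ℝ) - w| := by
    have : (1 : ℤ) ≤ |z - w| := Int.one_le_abs (sub_ne_zero.2 h)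
    exact_mod_cast this
  have h2 := abs_sub_le (z : ℝ) u w
  rw [abs_sub_comm (z : ℝ) u] at h2
  linarith

lemma abs_poleSum_sub_le {F : Finset ℤ} {z : ℤ} (hz : z ∈ F) {u : ℝ} (hu : |u - z| ≤ 1 / 2) :
    |poleSum F u - (u - z)⁻¹| ≤ 2 * F.card := by
  classical
  rw [poleSum, ← Finset.add_sum_erase _ _ hz, add_sub_cancel_left]
  calc |∑ w ∈ F.erase z, (u - w)⁻¹| ≤ ∑ w ∈ F.erase z, |(u - w)⁻¹| :=
        Finset.abs_sum_le_sum_abs _ _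
    _ ≤ ∑ w ∈ F.erase z, (2 : ℝ) := by
        refine Finset.sum_le_sum fun w hw => ?_
        have := one_half_le_abs_sub_int (Finset.ne_of_mem_erase hw).symm hu
        rw [abs_inv]
        exact inv_le_of_inv_le₀ two_pos (by linarith)
    _ = 2 * ((F.erase z).card : ℝ) := by simp [mul_comm]
    _ ≤ _ := by gcongr; exact Finset.erase_subset _ _

lemma exists_poleSum_eq {F : Finset ℤ} {t : ℝ} (ht : 0 < t) {z : ℤ} (hz : z ∈ F) :
    ∃ s : ℝ, (z : ℝ) < s ∧ poleSum F s = t ∧ ∀ w ∈ F, z < w → s < w := by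
  have hn : (1 : ℝ) ≤ F.card := by exact_mod_cast Finset.card_pos.2 ⟨z, hz⟩
  set δ : ℝ := (t + 2 * F.card)⁻¹ with hδ
  have hδ0 : 0 < δ := by positivity
  have hδ2 : δ ≤ 1 / 2 := by
    rw [hδ]; exact inv_le_of_inv_le₀ (by norm_num) (by norm_num; linarith)
  have hδ3 : δ < 1 / 2 := by
    rw [hδ]; exact inv_lt_of_inv_lt₀ (by norm_num) (by norm_num; linarith)
  have hδi : δ⁻¹ = t + 2 * F.card := by rw [hδ, inv_inv]
  have ha : t ≤ poleSum F (z + δ) := by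
    have := abs_poleSum_sub_le hz (u := z + δ) (by simpa [abs_of_pos hδ0] using hδ2)
    rw [add_sub_cancel_left, hδi] at this
    linarith [(abs_le.1 this).1]
  obtain ⟨b, hab, hb, hpole⟩ : ∃ b : ℝ, z + δ ≤ b ∧ poleSum F b ≤ t ∧
      ∀ w ∈ F, z < w → b < w := by
    rcases (F.filter (z < ·)).eq_empty_or_nonempty with he | hne
    · have hle : ∀ w ∈ F, w ≤ z := fun w hw => by
        by_contra h
        have : w ∈ F.filter (z < ·) := Finset.mem_filter.2 ⟨hw, not_le.1 h⟩
        simp [he] at this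
      have hnt : 0 < F.card / t := by positivity
      refine ⟨z + F.card / t, ?_, ?_, fun w hw h => absurd (hle w hw) (not_le.2 h)⟩
      · gcongr
        rw [hδ, inv_le_comm₀ (by positivity) hnt, inv_div]
        have : t / F.card ≤ t := div_le_self ht.le hn
        linarith
      · calc poleSum F (z + F.card / t) ≤ ∑ w ∈ F, (F.card / t)⁻¹ := by
              refine Finset.sum_le_sum fun w hw => ?_
              have : (w : ℝ) ≤ z := by exact_mod_cast hle w hw
              gcongr
              linarith
          _ = t := by
              rw [Finset.sum_const, nsmul_eq_mul, inv_div]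
              field_simp
    · set m := (F.filter (z < ·)).min' hne with hm
      have hmF := (Finset.mem_filter.1 ((F.filter (z < ·)).min'_mem hne))
      rw [← hm] at hmF
      have hzm : (z : ℝ) + 1 ≤ m := by exact_mod_cast hmF.2
      refine ⟨m - δ, by linarith, ?_, fun w hw h => ?_⟩
      · have := abs_poleSum_sub_le hmF.1 (u := m - δ) (by simpa [abs_of_pos hδ0] using hδ2)
        rw [show (m : ℝ) - δ - m = -δ by ring, inv_neg, hδi] at this
        linarith [(abs_le.1 this).2]
      · have : m ≤ w := Finset.min'_le _ _ (Finset.mem_filter.2 ⟨hw, h⟩)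
        have : (m : ℝ) ≤ w := by exact_mod_cast this
        linarith
  have hcont : ContinuousOn (poleSum F) (Set.Icc (z + δ) b) := by
    refine continuousOn_finsetSum _ fun w hw => ?_
    refine ContinuousOn.inv₀ (by fun_prop) fun u hu => ?_
    rcases lt_or_ge z w with h | h
    · have := hpole w hw h
      have := hu.2
      exact ne_of_lt (by linarith)
    · have h' : (w : ℝ) ≤ z := by exact_mod_cast h
      have := hu.1
      exact ne_of_gt (by linarith)
  obtain ⟨s, hs, hst⟩ := intermediate_value_Icc' hab hcont ⟨hb, ha⟩
  exact ⟨s, by linarith [hs.1], hst, fun w hw h => hs.2.trans_lt (hpole w hw h)⟩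

open Polynomial in
/-- Boole's identity: the solutions of `poleSum F s = t` are displaced from the poles by a total
of `|F| / t`. -/
lemma sum_sub_eq_card_div {F : Finset ℤ} {t : ℝ} (ht : 0 < t) {s : ℤ → ℝ}
    (hs : ∀ z ∈ F, (z : ℝ) < s z ∧ poleSum F (s z) = t ∧ ∀ w ∈ F, z < w → s z < w) :
    ∑ z ∈ F, (s z - z) = F.card / t := by
  classical
  rcases F.eq_empty_or_nonempty with rfl | hne
  · simp
  have hnpos : 0 < F.card := Finset.card_pos.2 hne
  have hinj : Set.InjOn s F := by
    intro z hz w hw h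
    rcases lt_trichotomy z w with hlt | rfl | hlt
    · have h1 := (hs z hz).2.2 w hw hlt
      have h2 := (hs w hw).1
      linarith
    · rfl
    · have h1 := (hs w hw).2.2 z hz hlt
      have h2 := (hs z hz).1
      linarith
  set p : ℝ[X] := ∏ z ∈ F, (X - C (z : ℝ)) with hp
  set q : ℝ[X] := ∏ z ∈ F, (X - C (s z)) with hq
  have hpm : p.Monic := monic_prod_of_monic _ _ fun z _ => monic_X_sub_C _
  have hqm : q.Monic := monic_prod_of_monic _ _ fun z _ => monic_X_sub_C _
  have hpd : p.natDegree = F.card := by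
    rw [hp, natDegree_prod_of_monic F (fun z => X - C (z : ℝ)) fun z _ => monic_X_sub_C _]
    simp only [natDegree_X_sub_C, Finset.sum_const, smul_eq_mul, mul_one]
  have hqd : q.natDegree = F.card := by
    rw [hq, natDegree_prod_of_monic F (fun z => X - C (s z)) fun z _ => monic_X_sub_C _]
    simp only [natDegree_X_sub_C, Finset.sum_const, smul_eq_mul, mul_one]
  have hdp : derivative p = ∑ z ∈ F, ∏ w ∈ F.erase z, (X - C (w : ℝ)) := by
    simp [hp, derivative_prod_finset]
  have hroot : ∀ z ∈ F, eval (s z) (C t * p - derivative p) = 0 := by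
    intro z hz
    have hne' : ∀ w ∈ F, s z - (w : ℝ) ≠ 0 := by
      intro w hw
      rcases lt_or_ge z w with h | h
      · exact (sub_neg.2 ((hs z hz).2.2 w hw h)).ne
      · have h' : (w : ℝ) ≤ z := by exact_mod_cast h
        have := (hs z hz).1
        exact ne_of_gt (by linarith)
    have h1 : eval (s z) (derivative p) = poleSum F (s z) * eval (s z) p := by
      rw [hdp, eval_finsetSum, poleSum, Finset.sum_mul]
      refine Finset.sum_congr rfl fun w hw => ?_
      rw [hp, ← Finset.mul_prod_erase _ _ hw, eval_mul, ← mul_assoc]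
      simp [inv_mul_cancel₀ (hne' w hw)]
    rw [eval_sub, h1, (hs z hz).2.1, eval_mul, eval_C, sub_self]
  have heq : C t * q = C t * p - derivative p := by
    refine eq_of_degree_sub_lt_of_eval_finset_eq (F.image s) ?_ ?_
    · rw [Finset.card_image_of_injOn hinj, sub_sub_eq_add_sub, add_comm, add_sub_assoc, ← mul_sub]
      refine (degree_add_le _ _).trans_lt (max_lt ?_ ?_)
      · calc (derivative p).degree < p.degree := degree_derivative_lt hpm.ne_zero
          _ = F.card := by rw [degree_eq_natDegree hpm.ne_zero, hpd]
      · rw [degree_C_mul ht.ne']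
        calc (q - p).degree < q.degree := degree_sub_lt_left (by
                rw [degree_eq_natDegree hpm.ne_zero, degree_eq_natDegree hqm.ne_zero, hpd, hqd])
              hqm.ne_zero (by rw [hpm.leadingCoeff, hqm.leadingCoeff])
          _ = F.card := by rw [degree_eq_natDegree hqm.ne_zero, hqd]
    · intro u hu
      obtain ⟨z, hz, rfl⟩ := Finset.mem_image.1 hu
      rw [hroot z hz, eval_mul, hq, eval_prod, Finset.prod_eq_zero hz (by simp), mul_zero]
  have hcoef := congrArg (fun f => f.coeff (F.card - 1)) heq
  simp only [coeff_sub, coeff_C_mul, coeff_derivative] at hcoef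
  rw [hp, hq, prod_X_sub_C_coeff_card_pred _ _ hnpos, prod_X_sub_C_coeff_card_pred _ _ hnpos,
    ← hp, Nat.sub_add_cancel hnpos, ← hpd, hpm.coeff_natDegree, hpd] at hcoef
  have hc : ((F.card - 1 : ℕ) : ℝ) + 1 = F.card := by
    rw [Nat.cast_sub hnpos]; simp
  rw [hc] at hcoef
  rw [Finset.sum_sub_distrib, eq_div_iff ht.ne']
  linarith

/-- The weak-type (1,1) bound for sums of simple poles sampled at the integers. -/
lemma mul_card_le_of_le_poleSum {F : Finset ℤ} {t : ℝ} (ht : 0 < t) {E : Finset ℤ}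
    (hE : ∀ x ∈ E, x ∉ F ∧ t ≤ poleSum F x) : t * E.card ≤ F.card := by
  classical
  have hex : ∀ z : ℤ, ∃ s : ℝ, z ∈ F →
      ((z : ℝ) < s ∧ poleSum F s = t ∧ ∀ w ∈ F, z < w → s < w) := fun z => by
    by_cases hz : z ∈ F
    · obtain ⟨s, hs⟩ := exists_poleSum_eq ht hz
      exact ⟨s, fun _ => hs⟩
    · exact ⟨0, fun h => absurd h hz⟩
  choose s hs using hex
  have hsub : E ⊆ F.biUnion fun z => Finset.Ioc z ⌊s z⌋ := by
    intro x hx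
    obtain ⟨hxF, hxt⟩ := hE x hx
    have hne : (F.filter (· < x)).Nonempty := by
      by_contra h
      rw [Finset.not_nonempty_iff_eq_empty, Finset.filter_eq_empty_iff] at h
      have : poleSum F x ≤ 0 := Finset.sum_nonpos fun w hw => by
        have h1 : (x : ℝ) ≤ w := by exact_mod_cast not_lt.1 (h hw)
        exact inv_nonpos.2 (by linarith)
      linarith
    set z := (F.filter (· < x)).max' hne with hzdef
    obtain ⟨hzF, hzx⟩ := Finset.mem_filter.1 ((F.filter (· < x)).max'_mem hne)
    rw [← hzdef] at hzF hzx
    have hzmax : ∀ w ∈ F, w < x → w ≤ z := fun w hw h =>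
      Finset.le_max' _ _ (Finset.mem_filter.2 ⟨hw, h⟩)
    obtain ⟨h1, h2, h3⟩ := hs z hzF
    refine Finset.mem_biUnion.2 ⟨z, hzF, Finset.mem_Ioc.2 ⟨hzx, Int.le_floor.2 ?_⟩⟩
    by_contra hlt
    push Not at hlt
    have : poleSum F x < poleSum F (s z) := by
      refine Finset.sum_lt_sum_of_nonempty ⟨z, hzF⟩ fun w hw => ?_
      rcases lt_or_ge x w with h | h
      · have h' : (x : ℝ) < w := by exact_mod_cast h
        rw [inv_lt_inv_of_neg (by linarith) (by linarith)]
        linarith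
      · have hwx : w < x := lt_of_le_of_ne h fun h' => hxF (h' ▸ hw)
        have h' : (w : ℝ) ≤ z := by exact_mod_cast hzmax w hw hwx
        exact inv_strictAnti₀ (by linarith) (by linarith)
    linarith
  have hcard : (E.card : ℝ) ≤ ∑ z ∈ F, (s z - z) := by
    calc (E.card : ℝ) ≤ ((∑ z ∈ F, (Finset.Ioc z ⌊s z⌋).card : ℕ) : ℝ) := by
          exact_mod_cast (Finset.card_le_card hsub).trans Finset.card_biUnion_le
      _ = ∑ z ∈ F, ((Finset.Ioc z ⌊s z⌋).card : ℝ) := by push_cast; rfl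
      _ ≤ _ := by
          refine Finset.sum_le_sum fun z hz => ?_
          have h0 : z ≤ ⌊s z⌋ := Int.le_floor.2 (hs z hz).1.le
          have h1 : (((Finset.Ioc z ⌊s z⌋).card : ℤ) : ℝ) = ((⌊s z⌋ - z : ℤ) : ℝ) := by
            rw [Int.card_Ioc, Int.toNat_of_nonneg (sub_nonneg.2 h0)]
          rw [Int.cast_natCast] at h1
          rw [h1, Int.cast_sub]
          linarith [Int.floor_le (s z)]
  rw [sum_sub_eq_card_div ht fun z hz => hs z hz, le_div_iff₀ ht] at hcard
  linarith

/-- The two-sided weak-type (1,1) bound. -/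
lemma mul_card_le_of_le_abs_poleSum {F : Finset ℤ} {t : ℝ} (ht : 0 < t) {E : Finset ℤ}
    (hE : ∀ x ∈ E, x ∉ F ∧ t ≤ |poleSum F x|) : t * E.card ≤ 2 * F.card := by
  classical
  have h1 : t * (E.filter fun x : ℤ => t ≤ poleSum F x).card ≤ F.card :=
    mul_card_le_of_le_poleSum ht fun x hx =>
      ⟨(hE x (Finset.mem_filter.1 hx).1).1, (Finset.mem_filter.1 hx).2⟩
  have h2 : t * ((E.filter fun x : ℤ => t ≤ -poleSum F x).image Neg.neg).card ≤
      (F.image Neg.neg).card := by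
    refine mul_card_le_of_le_poleSum ht fun x hx => ?_
    obtain ⟨y, hy, rfl⟩ := Finset.mem_image.1 hx
    obtain ⟨hyE, hyt⟩ := Finset.mem_filter.1 hy
    refine ⟨fun h => (hE y hyE).1 ?_, hyt.trans_eq ?_⟩
    · obtain ⟨w, hw, hwy⟩ := Finset.mem_image.1 h
      rwa [← neg_injective hwy]
    · rw [poleSum, poleSum, Finset.sum_image neg_injective.injOn, ← Finset.sum_neg_distrib]
      refine Finset.sum_congr rfl fun w _ => ?_
      push_cast
      rw [← inv_neg]; congr 1; ring
  rw [Finset.card_image_of_injective _ neg_injective,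
    Finset.card_image_of_injective _ neg_injective] at h2
  have h3 : E.card ≤ (E.filter fun x : ℤ => t ≤ poleSum F x).card +
      (E.filter fun x : ℤ => t ≤ -poleSum F x).card := by
    refine (Finset.card_le_card fun x hx => ?_).trans (Finset.card_union_le _ _)
    rw [Finset.mem_union, Finset.mem_filter, Finset.mem_filter]
    rcases le_abs.1 (hE x hx).2 with h | h
    · exact Or.inl ⟨hx, h⟩
    · exact Or.inr ⟨hx, h⟩
  have h4 : (E.card : ℝ) ≤ (E.filter fun x : ℤ => t ≤ poleSum F x).card +
      (E.filter fun x : ℤ => t ≤ -poleSum F x).card := by exact_mod_cast h3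
  nlinarith

lemma e2pi_add (s t : ℝ) : e2pi (s + t) = e2pi s * e2pi t := by
  simp only [e2pi, ← Complex.exp_add]; congr 1; push_cast; ring

@[simp] lemma e2pi_zero : e2pi 0 = 1 := by simp [e2pi]

@[simp] lemma e2pi_int (n : ℤ) : e2pi n = 1 := by
  rw [e2pi, Complex.exp_eq_one_iff]; exact ⟨n, by push_cast; ring⟩

lemma norm_e2pi (t : ℝ) : ‖e2pi t‖ = 1 := by
  rw [e2pi, show (2 * Real.pi * Complex.I * t : ℂ) = ((2 * Real.pi * t : ℝ) : ℂ) * Complex.I by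
    push_cast; ring, Complex.norm_exp_ofReal_mul_I]

lemma e2pi_add_int (t : ℝ) (n : ℤ) : e2pi (t + n) = e2pi t := by
  rw [e2pi_add, e2pi_int, mul_one]

lemma e2pi_congr {s t : ℝ} (h : ∃ n : ℤ, s = t + n) : e2pi s = e2pi t := by
  obtain ⟨n, rfl⟩ := h
  exact e2pi_add_int t n

lemma e2pi_eq_one_iff {t : ℝ} : e2pi t = 1 ↔ ∃ n : ℤ, t = n := by
  refine ⟨fun h => ?_, fun ⟨n, hn⟩ => hn ▸ e2pi_int n⟩
  obtain ⟨n, hn⟩ := Complex.exp_eq_one_iff.1 h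
  refine ⟨n, ?_⟩
  have h2 : (2 * Real.pi * Complex.I : ℂ) ≠ 0 := by simp [Real.pi_ne_zero]
  have : (t : ℂ) = n := mul_left_cancel₀ h2 (by rw [hn]; ring)
  exact_mod_cast this

lemma conj_e2pi (t : ℝ) : (starRingEnd ℂ) (e2pi t) = e2pi (-t) := by
  rw [e2pi, e2pi, ← Complex.exp_conj]
  congr 1
  simp [Complex.conj_ofReal, Complex.conj_ofNat]

@[fun_prop] lemma continuous_e2pi : Continuous e2pi := by unfold e2pi; fun_prop

lemma integral_e2pi_mul {c : ℝ} (hc : c ≠ 0) (a b : ℝ) :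
    ∫ ξ in a..b, e2pi (c * ξ) = (e2pi (c * b) - e2pi (c * a)) / (2 * Real.pi * Complex.I * c) := by
  have h2 : (2 * Real.pi * Complex.I * c : ℂ) ≠ 0 := by simp [Real.pi_ne_zero, hc]
  have := integral_exp_mul_complex (a := a) (b := b) h2
  simp only [e2pi]
  convert this using 3 <;> (push_cast; ring_nf)

lemma integral_e2pi_int (m : ℤ) :
    ∫ ξ in (0 : ℝ)..1, e2pi (m * ξ) = if m = 0 then 1 else 0 := by
  split_ifs with h
  · simp [h]
  · rw [integral_e2pi_mul (by exact_mod_cast h)]; simp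

/-- The convolution kernel of the projection to frequencies in `[0, 1/2]`. -/
def halfKer (x : ℤ) : ℂ := ∫ ξ in (0 : ℝ)..(1 / 2), e2pi (x * ξ)

/-- The projection of `1_F` to frequencies in `[0, 1/2]`. -/
def halfProj (F : Finset ℤ) (x : ℤ) : ℂ := ∑ z ∈ F, halfKer (x - z)

lemma halfKer_even {x : ℤ} (hx : Even x) (h0 : x ≠ 0) : halfKer x = 0 := by
  obtain ⟨k, rfl⟩ := hx
  rw [halfKer, integral_e2pi_mul (by exact_mod_cast h0)]
  rw [show ((k + k : ℤ) : ℝ) * (1 / 2) = (k : ℤ) by push_cast; ring]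
  simp

lemma halfKer_odd {x : ℤ} (hx : Odd x) : halfKer x = Complex.I / Real.pi * ((x : ℝ)⁻¹ : ℝ) := by
  have h0 : (x : ℝ) ≠ 0 := by
    have : x ≠ 0 := by rintro rfl; simp at hx
    exact_mod_cast this
  rw [halfKer, integral_e2pi_mul h0]
  obtain ⟨k, rfl⟩ := hx
  have h1 : e2pi (((2 * k + 1 : ℤ) : ℝ) * (1 / 2)) = -1 := by
    rw [show ((2 * k + 1 : ℤ) : ℝ) * (1 / 2) = 1 / 2 + (k : ℤ) by push_cast; ring, e2pi_add_int,
      e2pi]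
    rw [show (2 * Real.pi * Complex.I * ((1 / 2 : ℝ) : ℂ) : ℂ) = Real.pi * Complex.I by
      push_cast; ring, Complex.exp_pi_mul_I]
  have h2 : (Real.pi : ℂ) ≠ 0 := by simp [Real.pi_ne_zero]
  have h3 : (((2 * k + 1 : ℤ) : ℝ) : ℂ) ≠ 0 := by exact_mod_cast h0
  rw [h1, mul_zero, e2pi_zero, Complex.ofReal_inv]
  field_simp
  rw [Complex.I_sq]; ring

lemma norm_halfProj_of_notMem {F : Finset ℤ} {x : ℤ} (hx : x ∉ F) :
    ‖halfProj F x‖ = Real.pi⁻¹ * |poleSum (F.filter fun z => Odd (x - z)) x| := by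
  have h : halfProj F x = Complex.I / Real.pi *
      ((poleSum (F.filter fun z => Odd (x - z)) x : ℝ) : ℂ) := by
    rw [halfProj, poleSum, Complex.ofReal_sum, Finset.mul_sum, Finset.sum_filter]
    refine Finset.sum_congr rfl fun z hz => ?_
    split_ifs with hodd
    · rw [halfKer_odd hodd]; push_cast; rfl
    · exact halfKer_even (Int.not_odd_iff_even.1 hodd) (sub_ne_zero.2 fun h => hx (h ▸ hz))
  rw [h, norm_mul, norm_div, Complex.norm_I, Complex.norm_real, Complex.norm_real,
    Real.norm_of_nonneg Real.pi_pos.le, one_div, Real.norm_eq_abs]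

lemma mul_card_le_of_le_norm_halfProj {F : Finset ℤ} {t : ℝ} (ht : 0 < t) (ht1 : t ≤ 1)
    {E : Finset ℤ} (hE : ∀ x ∈ E, t ≤ ‖halfProj F x‖) : t * E.card ≤ 5 * F.card := by
  classical
  have hpar : ∀ P : ℤ → Prop, (∀ x y, P x → P y → Even (x - y)) →
      t * ((E \ F).filter P).card ≤ 2 * F.card := by
    intro P hP
    rcases ((E \ F).filter P).eq_empty_or_nonempty with he | ⟨y, hy⟩
    · rw [he]; simp
    have hy' := (Finset.mem_filter.1 hy).2
    refine (mul_card_le_of_le_abs_poleSum (F := F.filter fun z => Odd (y - z)) ht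
      fun x hx => ?_).trans ?_
    · obtain ⟨hx1, hx2⟩ := Finset.mem_filter.1 hx
      obtain ⟨hxE, hxF⟩ := Finset.mem_sdiff.1 hx1
      refine ⟨fun h => hxF (Finset.mem_filter.1 h).1, ?_⟩
      have h1 := hE x hxE
      rw [norm_halfProj_of_notMem hxF] at h1
      have h2 : (F.filter fun z => Odd (x - z)) = F.filter fun z => Odd (y - z) := by
        refine Finset.filter_congr fun z _ => ?_
        rw [show x - z = (x - y) + (y - z) by ring, Int.odd_add]
        constructor
        · intro h; by_contra h'
          exact Int.not_odd_iff_even.2 (hP x y hx2 hy') (h.2 (Int.not_odd_iff_even.1 h'))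
        · intro h
          exact ⟨fun h' => absurd (hP x y hx2 hy') (Int.not_even_iff_odd.2 h'),
            fun h' => absurd h (Int.not_odd_iff_even.2 h')⟩
      rw [h2] at h1
      refine h1.trans (mul_le_of_le_one_left (abs_nonneg _) ?_)
      exact inv_le_one_of_one_le₀ (by linarith [Real.pi_gt_three])
    · gcongr; exact Finset.filter_subset _ _
  have h1 : t * ((E \ F).filter fun x => Even x).card ≤ 2 * F.card := by
    convert hpar (fun x => Even x) fun x y hx hy => hx.sub hy
  have h2 : t * ((E \ F).filter fun x => ¬ Even x).card ≤ 2 * F.card := by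
    convert hpar (fun x => ¬ Even x) fun x y hx hy =>
      (Int.not_even_iff_odd.1 hx).sub_odd (Int.not_even_iff_odd.1 hy)
  have h3 : t * (E ∩ F).card ≤ F.card := by
    calc t * (E ∩ F).card ≤ 1 * F.card := by gcongr; exact Finset.inter_subset_right
      _ = _ := one_mul _
  have h4 : (E.card : ℝ) = ((E \ F).filter fun x => Even x).card +
      ((E \ F).filter fun x => ¬ Even x).card + (E ∩ F).card := by
    rw [← Finset.card_sdiff_add_card_inter E F,
      ← Finset.card_filter_add_card_filter_not (s := E \ F) (fun x => Even x)]
    push_cast; rfl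
  rw [h4]; linarith

lemma integral_norm_sq_sum_e2pi (F : Finset ℤ) :
    ∫ ξ in (0 : ℝ)..1, ‖∑ z ∈ F, e2pi (-(z * ξ))‖ ^ 2 = F.card := by
  have h1 : ∀ ξ : ℝ, ((‖∑ z ∈ F, e2pi (-(z * ξ))‖ ^ 2 : ℝ) : ℂ) =
      ∑ z ∈ F, ∑ w ∈ F, e2pi (((w - z : ℤ) : ℝ) * ξ) := by
    intro ξ
    rw [← Complex.normSq_eq_norm_sq, ← Complex.mul_conj, map_sum, Finset.sum_mul_sum]
    refine Finset.sum_congr rfl fun z _ => Finset.sum_congr rfl fun w _ => ?_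
    rw [conj_e2pi, ← e2pi_add]; congr 1; push_cast; ring
  have hint : ∀ m : ℤ, IntervalIntegrable (fun ξ : ℝ => e2pi ((m : ℝ) * ξ))
      MeasureTheory.volume 0 1 := fun m => Continuous.intervalIntegrable (by fun_prop) _ _
  have h2 : ((∫ ξ in (0 : ℝ)..1, ‖∑ z ∈ F, e2pi (-(z * ξ))‖ ^ 2 : ℝ) : ℂ) = (F.card : ℂ) := by
    rw [← intervalIntegral.integral_ofReal]
    simp_rw [h1]
    rw [intervalIntegral.integral_finsetSum fun z _ => by
      refine Continuous.intervalIntegrable ?_ _ _; fun_prop]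
    simp_rw [intervalIntegral.integral_finsetSum fun w _ => hint _, integral_e2pi_int, sub_eq_zero]
    simp
  exact_mod_cast h2

open MeasureTheory in
/-- Bessel's inequality for the half projection. -/
lemma tsum_enorm_halfProj_sq_le (F : Finset ℤ) :
    ∑' x, (‖halfProj F x‖ₑ) ^ 2 ≤ F.card := by
  set f : ℝ → ℂ := fun ξ => ∑ z ∈ F, e2pi (-(z * ξ)) with hf
  have hfc : Continuous f := by rw [hf]; fun_prop
  set g : ℝ → ℂ := (Set.Iic (1 / 2 : ℝ)).indicator f with hg
  have hL2 : MemLp g 2 (volume.restrict (Set.Ioc (0 : ℝ) 1)) := by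
    refine MemLp.indicator measurableSet_Iic ?_
    refine MemLp.of_bound hfc.aestronglyMeasurable (F.card : ℝ)
      (Filter.Eventually.of_forall fun ξ => ?_)
    refine (norm_sum_le _ _).trans ?_
    simp [norm_e2pi]
  have hP := hasSum_sq_fourierCoeffOn zero_lt_one hL2
  have hcoef : ∀ x : ℤ, fourierCoeffOn zero_lt_one g (-x) = halfProj F x := by
    intro x
    rw [fourierCoeffOn_eq_integral]
    have h1 : ∀ ξ : ℝ, (fourier (- -x) (ξ : AddCircle ((1 : ℝ) - 0))) • g ξ =
        {ξ | ξ ≤ (1 / 2 : ℝ)}.indicator (fun ξ => ∑ z ∈ F, e2pi (((x - z : ℤ) : ℝ) * ξ)) ξ := by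
      intro ξ
      simp only [hg, Set.indicator_apply, Set.mem_Iic, Set.mem_ofPred_eq]
      split_ifs
      · rw [hf, smul_eq_mul, Finset.mul_sum]
        refine Finset.sum_congr rfl fun z _ => ?_
        rw [fourier_coe_apply, e2pi, e2pi, ← Complex.exp_add]
        congr 1; push_cast; ring
      · simp
    simp_rw [h1]
    rw [intervalIntegral.integral_indicator (by norm_num), halfProj,
      intervalIntegral.integral_finsetSum fun z _ =>
        Continuous.intervalIntegrable (by fun_prop) _ _]
    simp [halfKer]
  have hsum : HasSum (fun x : ℤ => ‖halfProj F x‖ ^ 2)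
      (((1 : ℝ) - 0)⁻¹ • ∫ x in (0 : ℝ)..1, ‖g x‖ ^ 2) := by
    rw [← (Equiv.neg ℤ).hasSum_iff] at hP
    simpa [Function.comp_def, hcoef] using hP
  have hle : ((1 : ℝ) - 0)⁻¹ • ∫ x in (0 : ℝ)..1, ‖g x‖ ^ 2 ≤ F.card := by
    rw [sub_zero, inv_one, one_smul, ← integral_norm_sq_sum_e2pi F]
    rw [intervalIntegral.integral_of_le zero_le_one, intervalIntegral.integral_of_le zero_le_one]
    refine integral_mono_of_nonneg (Filter.Eventually.of_forall fun _ => by positivity) ?_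
      (Filter.Eventually.of_forall fun ξ => ?_)
    · exact (Continuous.integrableOn_Icc (by fun_prop)).mono_set Set.Ioc_subset_Icc_self
    · show ‖g ξ‖ ^ 2 ≤ ‖f ξ‖ ^ 2
      gcongr
      exact norm_indicator_le_norm_self _ _
  calc ∑' x, (‖halfProj F x‖ₑ) ^ 2 = ∑' x, ENNReal.ofReal (‖halfProj F x‖ ^ 2) := by
        refine tsum_congr fun x => ?_
        rw [ENNReal.ofReal_pow (norm_nonneg _), ofReal_norm]
    _ = ENNReal.ofReal (∑' x, ‖halfProj F x‖ ^ 2) :=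
        (ENNReal.ofReal_tsum_of_nonneg (fun _ => by positivity) hsum.summable).symm
    _ ≤ ENNReal.ofReal F.card := by rw [hsum.tsum_eq]; exact ENNReal.ofReal_le_ofReal hle
    _ = F.card := ENNReal.ofReal_natCast _

lemma tsum_indicator_lt_enorm_halfProj_le (F : Finset ℤ) {t : ℝ} (ht : 0 < t) (ht1 : t ≤ 1) :
    ENNReal.ofReal t * ∑' x : ℤ,
      {x : ℤ | ENNReal.ofReal t < ‖halfProj F x‖ₑ}.indicator (fun _ => (1 : ℝ≥0∞)) x ≤
        5 * F.card := by
  classical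
  rw [← ENNReal.tsum_mul_left, ENNReal.tsum_eq_iSup_sum]
  refine iSup_le fun s => ?_
  have h1 : ∑ x ∈ s, {x : ℤ | ENNReal.ofReal t < ‖halfProj F x‖ₑ}.indicator
      (fun _ => (1 : ℝ≥0∞)) x =
      ((s.filter fun x => ENNReal.ofReal t < ‖halfProj F x‖ₑ).card : ℝ≥0∞) := by
    rw [Finset.card_filter]
    push_cast
    simp [Set.indicator_apply]
  rw [← Finset.mul_sum, h1]
  have h2 := mul_card_le_of_le_norm_halfProj (F := F) ht ht1
    (E := s.filter fun x => ENNReal.ofReal t < ‖halfProj F x‖ₑ) fun x hx => by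
      have := (Finset.mem_filter.1 hx).2
      rw [← ofReal_norm, ENNReal.ofReal_lt_ofReal_iff'] at this
      exact this.1.le
  rw [← ENNReal.ofReal_natCast, ← ENNReal.ofReal_mul ht.le]
  refine (ENNReal.ofReal_le_ofReal h2).trans_eq ?_
  rw [ENNReal.ofReal_mul (by norm_num), ENNReal.ofReal_natCast, ENNReal.ofReal_ofNat]

open MeasureTheory in
/-- The `ℓ^r` bound for the half projection of an indicator function, `1 < r < 2`. -/
lemma tsum_enorm_halfProj_rpow_le {r : ℝ} (hr : 1 < r) (hr2 : r < 2) (F : Finset ℤ) :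
    ∑' x, ‖halfProj F x‖ₑ ^ r ≤ ENNReal.ofReal (5 * r / (r - 1) + 1) * F.card := by
  have hr0 : 0 < r := by linarith
  have hr1 : 0 < r - 1 := by linarith
  have hmeas' : ∀ a : ℝ≥0∞, Measurable fun t : ℝ =>
      {t : ℝ | ENNReal.ofReal t < a}.indicator (fun _ => (1 : ℝ≥0∞)) t := fun a =>
    measurable_const.indicator (measurableSet_lt ENNReal.measurable_ofReal measurable_const)
  have hmeas : ∀ (s : ℝ) (a : ℝ≥0∞), Measurable fun t : ℝ => ENNReal.ofReal (t ^ s) *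
      {t : ℝ | ENNReal.ofReal t < a}.indicator (fun _ => (1 : ℝ≥0∞)) t := fun s a =>
    (measurable_id.pow_const s).ennreal_ofReal.mul (hmeas' a)
  have hsmall : ∑' x, min ‖halfProj F x‖ₑ 1 ^ r ≤ ENNReal.ofReal (5 * r / (r - 1)) * F.card := by
    have e1 : ∀ x, min ‖halfProj F x‖ₑ 1 ^ r = ENNReal.ofReal r *
        ∫⁻ t in Set.Ioi (0 : ℝ), ENNReal.ofReal (t ^ (r - 1)) *
          {t : ℝ | ENNReal.ofReal t < min ‖halfProj F x‖ₑ 1}.indicator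
            (fun _ => (1 : ℝ≥0∞)) t := by
      intro x
      rw [lintegral_Ioi_rpow_indicator hr0 (ne_top_of_le_ne_top ENNReal.one_ne_top
        (min_le_right _ _)), ← mul_assoc, ← ENNReal.ofReal_mul hr0.le,
        mul_one_div_cancel hr0.ne', ENNReal.ofReal_one, one_mul]
    calc ∑' x, min ‖halfProj F x‖ₑ 1 ^ r
        = ENNReal.ofReal r * ∫⁻ t in Set.Ioi (0 : ℝ), ∑' x, ENNReal.ofReal (t ^ (r - 1)) *
            {t : ℝ | ENNReal.ofReal t < min ‖halfProj F x‖ₑ 1}.indicator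
              (fun _ => (1 : ℝ≥0∞)) t := by
          simp_rw [e1, ENNReal.tsum_mul_left]
          simp_rw [← ENNReal.tsum_mul_left (a := ENNReal.ofReal (_ ^ (r - 1)))]
          rw [lintegral_tsum fun x => (hmeas _ _).aemeasurable]
      _ ≤ ENNReal.ofReal r * ∫⁻ t in Set.Ioi (0 : ℝ), (5 * F.card) *
            (ENNReal.ofReal (t ^ (r - 1 - 1)) *
              {t : ℝ | ENNReal.ofReal t < 1}.indicator (fun _ => (1 : ℝ≥0∞)) t) := by
          refine mul_le_mul_right ?_ _
          refine setLIntegral_mono' measurableSet_Ioi fun t ht => ?_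
          have ht0 : (0 : ℝ) < t := ht
          rw [ENNReal.tsum_mul_left]
          by_cases h1 : ENNReal.ofReal t < 1
          · have ht1 : t ≤ 1 := (ENNReal.ofReal_lt_one.1 h1).le
            have h2 := tsum_indicator_lt_enorm_halfProj_le F ht0 ht1
            rw [show ENNReal.ofReal (t ^ (r - 1)) =
                ENNReal.ofReal (t ^ (r - 1 - 1)) * ENNReal.ofReal t by
              rw [← ENNReal.ofReal_mul (by positivity), ← Real.rpow_add_one ht0.ne',
                sub_add_cancel], mul_assoc]
            rw [Set.indicator_of_mem (by exact h1), mul_one, mul_comm (5 * (F.card : ℝ≥0∞))]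
            refine mul_le_mul_right (le_trans ?_ h2) _
            refine mul_le_mul_right (ENNReal.tsum_le_tsum fun x => ?_) _
            by_cases h3 : ENNReal.ofReal t < ‖halfProj F x‖ₑ
            · simp only [Set.indicator_apply, Set.mem_ofPred_eq, lt_min_iff, h1, h3, and_self,
                if_true, le_refl]
            · simp only [Set.indicator_apply, Set.mem_ofPred_eq, lt_min_iff, h3, false_and,
                if_false, le_refl]
          · simp only [Set.indicator_apply, Set.mem_ofPred_eq, lt_min_iff, h1, and_false,
              if_false, tsum_zero, mul_zero, le_refl]
      _ = _ := by
          rw [lintegral_const_mul _ (hmeas _ _),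
            lintegral_Ioi_rpow_indicator hr1 ENNReal.one_ne_top, ENNReal.one_rpow, mul_one,
            show 5 * r / (r - 1) = r * (5 * (1 / (r - 1))) by ring,
            ENNReal.ofReal_mul hr0.le, ENNReal.ofReal_mul (by norm_num), ENNReal.ofReal_ofNat]
          ring
  calc ∑' x, ‖halfProj F x‖ₑ ^ r
      ≤ ∑' x, (min ‖halfProj F x‖ₑ 1 ^ r + ‖halfProj F x‖ₑ ^ 2) := by
        refine ENNReal.tsum_le_tsum fun x => ?_
        rcases le_total ‖halfProj F x‖ₑ 1 with h | h
        · rw [min_eq_left h]; exact le_self_add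
        · calc ‖halfProj F x‖ₑ ^ r ≤ ‖halfProj F x‖ₑ ^ (2 : ℝ) :=
                ENNReal.rpow_le_rpow_of_exponent_le h hr2.le
            _ = ‖halfProj F x‖ₑ ^ 2 := by norm_cast
            _ ≤ _ := le_add_self
    _ ≤ ENNReal.ofReal (5 * r / (r - 1)) * F.card + F.card := by
        rw [ENNReal.tsum_add]
        exact add_le_add hsmall (tsum_enorm_halfProj_sq_le F)
    _ = _ := by
        rw [ENNReal.ofReal_add (by positivity) zero_le_one, ENNReal.ofReal_one, add_mul, one_mul]

lemma sum_Icc_modEq_eq_sum_range {M : Type*} [AddCommMonoid M] {g d : ℕ} (hg : 0 < g) (hd : 0 < d)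
    (b : ℤ) (H : ℤ → M) (hH : ∀ m n, ((g * d : ℕ) : ℤ) ∣ m - n → H m = H n) :
    ∑ r ∈ (Finset.Icc 1 (g * d)).filter (fun r : ℕ => (r : ℤ) % g = b % g), H r =
      ∑ s ∈ Finset.range d, H (b + g * s) := by
  have hq : (0 : ℤ) < ((g * d : ℕ) : ℤ) := by exact_mod_cast Nat.mul_pos hg hd
  have hgd : ((g * d : ℕ) : ℤ) = g * d := by push_cast; ring
  have key : ∀ s : ℤ, ((((b + g * s - 1) % ((g * d : ℕ) : ℤ) + 1).toNat : ℕ) : ℤ) =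
      (b + g * s - 1) % ((g * d : ℕ) : ℤ) + 1 := fun s =>
    Int.toNat_of_nonneg (by linarith [Int.emod_nonneg (b + g * s - 1) hq.ne'])
  have key2 : ∀ s : ℤ, ((g * d : ℕ) : ℤ) ∣
      ((((b + g * s - 1) % ((g * d : ℕ) : ℤ) + 1).toNat : ℕ) : ℤ) - (b + g * s) := by
    intro s
    rw [key, show (b + g * s - 1) % ((g * d : ℕ) : ℤ) + 1 - (b + g * s) =
      -((b + g * s - 1) - (b + g * s - 1) % ((g * d : ℕ) : ℤ)) by ring, dvd_neg]
    exact Int.dvd_self_sub_emod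
  symm
  refine Finset.sum_bij
    (fun s _ => ((b + g * (s : ℤ) - 1) % ((g * d : ℕ) : ℤ) + 1).toNat) ?_ ?_ ?_ ?_
  · intro s _
    have h0 := Int.emod_nonneg (b + g * (s : ℤ) - 1) hq.ne'
    have h1 := Int.emod_lt_of_pos (b + g * (s : ℤ) - 1) hq
    rw [Finset.mem_filter, Finset.mem_Icc]
    refine ⟨⟨?_, ?_⟩, ?_⟩
    · have := key s; omega
    · have := key s; omega
    · refine (Int.modEq_iff_dvd.2 ?_ : (b : ℤ) ≡ _ [ZMOD g]).symm
      rw [← sub_add_cancel ((((b + g * (s : ℤ) - 1) % ((g * d : ℕ) : ℤ) + 1).toNat : ℕ) : ℤ)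
        (b + g * (s : ℤ)), show ∀ u : ℤ, u + (b + g * (s : ℤ)) - b = u + g * (s : ℤ) by
          intro u; ring]
      refine dvd_add (dvd_trans ?_ (key2 s)) (dvd_mul_right _ _)
      rw [hgd]; exact dvd_mul_right _ _
  · intro s hs s' hs' h
    have h1 := key2 s
    have h2 := key2 s'
    rw [h] at h1
    have h3 := dvd_sub h2 h1
    rw [show (((((b + g * (s' : ℤ) - 1) % ((g * d : ℕ) : ℤ) + 1).toNat : ℕ) : ℤ) -
      (b + g * (s' : ℤ))) - (((((b + g * (s' : ℤ) - 1) % ((g * d : ℕ) : ℤ) + 1).toNat : ℕ) : ℤ) -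
      (b + g * (s : ℤ))) = g * ((s : ℤ) - s') by ring, hgd] at h3
    have h4 : (d : ℤ) ∣ (s : ℤ) - s' := Int.dvd_of_mul_dvd_mul_left (by exact_mod_cast hg.ne') h3
    rw [Finset.mem_range] at hs hs'
    have h5 := Int.eq_zero_of_abs_lt_dvd h4 (by rw [abs_lt]; constructor <;> omega)
    omega
  · intro r hr
    rw [Finset.mem_filter, Finset.mem_Icc] at hr
    obtain ⟨⟨hr1, hr2⟩, hr3⟩ := hr
    obtain ⟨t, ht⟩ : (g : ℤ) ∣ r - b := Int.ModEq.dvd (Int.ModEq.symm hr3)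
    have hd' : (0 : ℤ) < d := by exact_mod_cast hd
    have h0 := Int.emod_nonneg t hd'.ne'
    have h1 := Int.emod_lt_of_pos t hd'
    refine ⟨(t % d).toNat, by rw [Finset.mem_range]; omega, ?_⟩
    rw [Int.toNat_of_nonneg h0]
    have h2 := key2 (t % d)
    have h3 := key (t % d)
    have h4 := Int.emod_nonneg (b + g * (t % d) - 1) hq.ne'
    have h5 := Int.emod_lt_of_pos (b + g * (t % d) - 1) hq
    have h6 : ((g * d : ℕ) : ℤ) ∣ (r : ℤ) - (b + g * (t % d)) := by
      rw [show (r : ℤ) - (b + g * (t % d)) = g * (t - t % d) by linear_combination ht, hgd]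
      exact mul_dvd_mul_left _ Int.dvd_self_sub_emod
    have h7 := dvd_sub h2 h6
    rw [sub_sub_sub_cancel_right] at h7
    have h8 := Int.eq_zero_of_abs_lt_dvd h7 (by rw [abs_lt]; constructor <;> omega)
    omega
  · intro s _
    exact (hH _ _ (key2 s)).symm

lemma sum_range_add_of_periodic {M : Type*} [AddCommMonoid M] {d : ℕ} (hd : 0 < d) (h : ℤ)
    (G : ℤ → M) (hG : ∀ m n, (d : ℤ) ∣ m - n → G m = G n) :
    ∑ s ∈ Finset.range d, G (s + h) = ∑ s ∈ Finset.range d, G s := by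
  have h1 := sum_Icc_modEq_eq_sum_range one_pos hd h G (by simpa using hG)
  have h2 := sum_Icc_modEq_eq_sum_range one_pos hd 0 G (by simpa using hG)
  simp only [Nat.cast_one, Int.emod_one] at h1 h2
  rw [h1] at h2
  simpa [add_comm] using h2

open ArithmeticFunction in
lemma sum_moebius_divisors_gcd {R : Type*} [Ring R] (c : ℕ) {d : ℕ} (hd : 0 < d) :
    ∑ e ∈ d.divisors with e ∣ c, (moebius e : R) = if Nat.gcd c d = 1 then 1 else 0 := by
  have h1 : d.divisors.filter (fun e => e ∣ c) = (Nat.gcd c d).divisors := by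
    ext e
    have : Nat.gcd c d ≠ 0 := (Nat.gcd_pos_of_pos_right _ hd).ne'
    simp only [Finset.mem_filter, Nat.mem_divisors, Nat.dvd_gcd_iff, ne_eq, this, hd.ne',
      not_false_eq_true, and_true]
    tauto
  have h2 := congrArg (fun f : ArithmeticFunction R => f (Nat.gcd c d))
    (coe_moebius_mul_coe_zeta (R := R))
  simp only [coe_mul_zeta_apply, one_apply, intCoe_apply] at h2
  rw [h1, h2]

lemma sum_range_e2pi_mul_div {n : ℕ} (hn : 0 < n) (m : ℤ) :
    ∑ c ∈ Finset.range n, e2pi (m * c / n) = if (n : ℤ) ∣ m then (n : ℂ) else 0 := by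
  have hn' : (n : ℝ) ≠ 0 := by exact_mod_cast hn.ne'
  have h1 : ∀ c : ℕ, e2pi (m * c / n) = e2pi (m / n) ^ c := by
    intro c
    rw [e2pi, e2pi, ← Complex.exp_nat_mul]
    congr 1; push_cast; ring
  simp_rw [h1]
  split_ifs with h
  · obtain ⟨k, rfl⟩ := h
    rw [show (((n : ℤ) * k : ℤ) : ℝ) / n = (k : ℤ) by push_cast; field_simp, e2pi_int]
    simp
  · have h2 : e2pi (m / n) ≠ 1 := by
      rw [Ne, e2pi_eq_one_iff]
      rintro ⟨k, hk⟩
      rw [div_eq_iff hn'] at hk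
      exact h ⟨k, by rw [mul_comm]; exact_mod_cast hk⟩
    rw [geom_sum_eq h2, ← h1, mul_div_assoc, div_self hn', mul_one, e2pi_int, sub_self, zero_div]

open ArithmeticFunction in
/-- A Ramanujan type sum over `c` modulo `n` coprime to a divisor `d` of `n`. -/
lemma sum_range_coprime_e2pi {n d : ℕ} (hn : 0 < n) (hd : d ∣ n) (m : ℤ) :
    ∑ c ∈ (Finset.range n).filter (fun c => Nat.gcd c d = 1), e2pi (m * c / n) =
      ∑ e ∈ d.divisors, (moebius e : ℂ) *
        if ((n / e : ℕ) : ℤ) ∣ m then ((n / e : ℕ) : ℂ) else 0 := by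
  have hd0 : 0 < d := Nat.pos_of_dvd_of_pos hd hn
  calc ∑ c ∈ (Finset.range n).filter (fun c => Nat.gcd c d = 1), e2pi (m * c / n)
      = ∑ c ∈ Finset.range n, ∑ e ∈ d.divisors with e ∣ c, (moebius e : ℂ) * e2pi (m * c / n) := by
        rw [Finset.sum_filter]
        refine Finset.sum_congr rfl fun c _ => ?_
        rw [← Finset.sum_mul, sum_moebius_divisors_gcd c hd0]
        split_ifs <;> simp
    _ = ∑ e ∈ d.divisors, (moebius e : ℂ) *
          ∑ c ∈ (Finset.range n).filter (fun c => e ∣ c), e2pi (m * c / n) := by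
        simp_rw [Finset.sum_filter, Finset.mul_sum]
        rw [Finset.sum_comm]
        refine Finset.sum_congr rfl fun e _ => Finset.sum_congr rfl fun c _ => ?_
        split_ifs <;> simp
    _ = _ := by
        refine Finset.sum_congr rfl fun e he => ?_
        have hed : e ∣ n := (Nat.dvd_of_mem_divisors he).trans hd
        have he0 : 0 < e := Nat.pos_of_mem_divisors he
        obtain ⟨k, rfl⟩ := hed
        have hk : 0 < k := Nat.pos_of_mul_pos_left hn
        rw [Nat.mul_div_cancel_left _ he0, ← sum_range_e2pi_mul_div hk]
        congr 1
        symm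
        refine Finset.sum_nbij (fun c => e * c) ?_ ?_ ?_ ?_
        · intro c hc
          simp only [Finset.mem_filter, Finset.mem_range] at hc ⊢
          exact ⟨Nat.mul_lt_mul_of_pos_left hc he0, dvd_mul_right _ _⟩
        · intro c _ c' _ h
          exact Nat.eq_of_mul_eq_mul_left he0 h
        · intro c hc
          simp only [Finset.coe_filter, Finset.mem_range, Set.mem_ofPred_eq] at hc
          obtain ⟨h1, t, rfl⟩ := hc
          exact ⟨t, by simpa using Nat.lt_of_mul_lt_mul_left h1, rfl⟩
        · intro c _
          congr 1
          have : (e : ℝ) ≠ 0 := by exact_mod_cast he0.ne'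
          push_cast
          field_simp

open ArithmeticFunction in
lemma sum_range_coprime_e2pi_of_coprime {d : ℕ} (hd : 0 < d) {m : ℤ} (hm : Int.gcd m d = 1) :
    ∑ c ∈ (Finset.range d).filter (fun c => Nat.gcd c d = 1), e2pi (m * c / d) =
      (moebius d : ℂ) := by
  rw [sum_range_coprime_e2pi hd dvd_rfl, Finset.sum_eq_single d]
  · simp [Nat.div_self hd]
  · intro e he hed
    have h1 := Nat.dvd_of_mem_divisors he
    rw [if_neg, mul_zero]
    intro h
    obtain ⟨k, rfl⟩ := h1
    have he0 : 0 < e := Nat.pos_of_mem_divisors he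
    rw [Nat.mul_div_cancel_left _ he0] at h
    have : (k : ℤ) ∣ Int.gcd m ((e * k : ℕ) : ℤ) :=
      Int.dvd_coe_gcd h (by push_cast; exact dvd_mul_left _ _)
    rw [hm] at this
    have : k = 1 := by simpa using (by exact_mod_cast this : k ∣ 1)
    simp [this] at hed
  · intro h; simp [hd.ne'] at h

/-- The summand of `Ups`, as a function on `ℤ`. -/
def upsTerm (a : ℤ) (q : ℕ) (m : ℤ) : ℂ :=
  if Int.gcd m q = 1 then e2pi (-(((m * a : ℤ) : ℝ) / q)) else 0

lemma upsTerm_congr {a : ℤ} {q : ℕ} (hq : 0 < q) {m n : ℤ} (h : (q : ℤ) ∣ m - n) :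
    upsTerm a q m = upsTerm a q n := by
  obtain ⟨k, hk⟩ := h
  obtain rfl : m = n + q * k := by linear_combination hk
  have hq' : (q : ℝ) ≠ 0 := by exact_mod_cast hq.ne'
  have hgcd : Int.gcd (n + q * k) q = Int.gcd n q := by
    exact Int.gcd_add_mul_left_left _ _ _
  rw [upsTerm, upsTerm, hgcd]
  congr 1
  refine e2pi_congr ⟨-(k * a), ?_⟩
  push_cast
  field_simp
  ring

lemma Ups_eq_sum_upsTerm {y g d : ℕ} (hg : 0 < g) (hd : 0 < d) (hgy : Nat.gcd y (g * d) = g)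
    {b b' : ℤ} (hb : b % g = b' % g) (a : ℤ) :
    Ups y b a (g * d) = ((Nat.totient y : ℂ) / (Nat.totient (Nat.lcm y (g * d)) : ℂ)) *
      ∑ s ∈ Finset.range d, upsTerm a (g * d) (b' + g * s) := by
  rw [Ups, ← sum_Icc_modEq_eq_sum_range hg hd b' _
    fun m n h => upsTerm_congr (Nat.mul_pos hg hd) h, hgy]
  congr 1
  rw [← hb, Finset.sum_filter, Finset.sum_filter]
  refine Finset.sum_congr rfl fun r _ => ?_
  rw [upsTerm, Int.gcd_natCast_natCast]
  split_ifs <;> first | rfl | tauto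

/-- `Υ(a,q)` vanishes when `g = gcd(y,q)` and `q/g` share a prime. -/
lemma Ups_eq_zero {y g d : ℕ} (hg : 0 < g) (hd : 0 < d) (hgy : Nat.gcd y (g * d) = g)
    (hgd : Nat.gcd g d ≠ 1) (b : ℤ) {a : ℤ} (ha : Int.gcd a (g * d : ℕ) = 1) :
    Ups y b a (g * d) = 0 := by
  obtain ⟨p, hp, hpgd⟩ := Nat.exists_prime_and_dvd hgd
  have hpg : p ∣ g := hpgd.trans (Nat.gcd_dvd_left _ _)
  obtain ⟨h, rfl⟩ : p ∣ d := hpgd.trans (Nat.gcd_dvd_right _ _)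
  have hp0 : (p : ℝ) ≠ 0 := by exact_mod_cast hp.ne_zero
  have hg0 : (g : ℝ) ≠ 0 := by exact_mod_cast hg.ne'
  have hh : h ≠ 0 := by rintro rfl; simp at hd
  have hh0 : (h : ℝ) ≠ 0 := by exact_mod_cast hh
  rw [Ups_eq_sum_upsTerm hg hd hgy rfl]
  set G : ℤ → ℂ := fun s => upsTerm a (g * (p * h)) (b + g * s) with hG
  have hper : ∀ m n, ((p * h : ℕ) : ℤ) ∣ m - n → G m = G n := by
    intro m n hmn
    refine upsTerm_congr (Nat.mul_pos hg hd) ?_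
    rw [add_sub_add_left_eq_sub, ← mul_sub, Nat.cast_mul g]
    exact mul_dvd_mul_left _ hmn
  have hmul : ∀ s, G (s + h) = e2pi (-(a / p)) * G s := by
    intro s
    have hcop : ∀ m : ℤ, IsCoprime m ((g * (p * h) : ℕ) : ℤ) ↔ IsCoprime m (g * h : ℤ) := by
      intro m
      push_cast
      rw [IsCoprime.mul_right_iff, IsCoprime.mul_right_iff, IsCoprime.mul_right_iff]
      refine ⟨fun ⟨h1, _, h2⟩ => ⟨h1, h2⟩, fun ⟨h1, h2⟩ => ⟨h1, ?_, h2⟩⟩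
      exact h1.of_isCoprime_of_dvd_right (by exact_mod_cast hpg)
    have h1 : Int.gcd (b + g * (s + h)) (g * (p * h) : ℕ) = 1 ↔
        Int.gcd (b + g * s) (g * (p * h) : ℕ) = 1 := by
      rw [← Int.isCoprime_iff_gcd_eq_one, ← Int.isCoprime_iff_gcd_eq_one, hcop, hcop,
        show b + g * (s + h) = b + g * s + g * h * 1 by ring]
      exact IsCoprime.add_mul_left_left_iff
    simp only [hG, upsTerm, h1]
    split_ifs
    · rw [← e2pi_add]
      congr 1
      push_cast
      field_simp
      ring
    · simp
  have h2 := sum_range_add_of_periodic hd h G hper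
  simp_rw [hmul] at h2
  rw [← Finset.mul_sum] at h2
  have hne : e2pi (-(a / p)) ≠ 1 := by
    rw [Ne, e2pi_eq_one_iff]
    rintro ⟨k, hk⟩
    have h3 : (a : ℝ) = p * (-k : ℤ) := by
      push_cast
      rw [← hk]
      field_simp
    have h4 : (p : ℤ) ∣ a := ⟨-k, by exact_mod_cast h3⟩
    have h5 : (p : ℤ) ∣ Int.gcd a (g * (p * h) : ℕ) := Int.dvd_coe_gcd h4
      (by exact_mod_cast (dvd_mul_right p h).mul_left g)
    rw [ha] at h5
    exact hp.one_lt.ne' (by simpa using (by exact_mod_cast h5 : p ∣ 1))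
  have h6 : (e2pi (-(a / p)) - 1) * ∑ s ∈ Finset.range (p * h), G s = 0 := by
    rw [sub_mul, h2, one_mul, sub_self]
  have h7 := (mul_eq_zero.1 h6).resolve_left (sub_ne_zero.2 hne)
  rw [h7, mul_zero]

open ArithmeticFunction in
lemma Ups_eq_moebius {y g d : ℕ} (hg : 0 < g) (hd : 0 < d) (hgy : g ∣ y) (hy : 0 < y)
    (hyd : Nat.gcd y d = 1) {b b' : ℤ} (hb : Int.gcd b y = 1) (hbb : b % g = b' % g)
    (hb' : (d : ℤ) ∣ b') {a : ℤ} (ha : Int.gcd a (g * d : ℕ) = 1) :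
    Ups y b a (g * d) = (moebius d : ℂ) / Nat.totient d *
      e2pi (-(b' * a / ((g * d : ℕ) : ℝ))) := by
  have hg0 : (g : ℝ) ≠ 0 := by exact_mod_cast hg.ne'
  have hd0 : (d : ℝ) ≠ 0 := by exact_mod_cast hd.ne'
  have hgcd : Nat.gcd y (g * d) = g := by
    rw [Nat.Coprime.gcd_mul_right_cancel_right _ (Nat.coprime_comm.1 hyd)]
    exact Nat.gcd_eq_right hgy
  have hlcm : Nat.lcm y (g * d) = y * d := by
    obtain ⟨k, rfl⟩ := hgy
    rw [Nat.lcm, hgcd, show g * k * (g * d) = g * (g * k * d) by ring,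
      Nat.mul_div_cancel_left _ hg]
  have hgd : IsCoprime (g : ℤ) (d : ℤ) :=
    Nat.isCoprime_iff_coprime.2 (Nat.Coprime.coprime_dvd_left hgy hyd)
  have hbg : IsCoprime b (g : ℤ) :=
    (Int.isCoprime_iff_gcd_eq_one.2 hb).of_isCoprime_of_dvd_right (by exact_mod_cast hgy)
  have hbg' : IsCoprime b' (g : ℤ) := by
    obtain ⟨k, hk⟩ : (g : ℤ) ∣ b' - b := Int.ModEq.dvd hbb
    obtain rfl : b' = b + g * k := by linear_combination hk
    exact IsCoprime.add_mul_left_left_iff.2 hbg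
  have had : Int.gcd (-a) d = 1 := by
    rw [Int.neg_gcd, ← Int.isCoprime_iff_gcd_eq_one]
    exact (Int.isCoprime_iff_gcd_eq_one.2 ha).of_isCoprime_of_dvd_right
      (by push_cast; exact dvd_mul_left _ _)
  have hterm : ∀ s : ℕ, upsTerm a (g * d) (b' + g * s) =
      if Nat.gcd s d = 1 then e2pi (-(b' * a / ((g * d : ℕ) : ℝ))) *
        e2pi (((-a : ℤ) : ℝ) * s / d) else 0 := by
    intro s
    have h1 : Int.gcd (b' + g * s) ((g * d : ℕ) : ℤ) = 1 ↔ Nat.gcd s d = 1 := by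
      rw [← Int.isCoprime_iff_gcd_eq_one, ← Nat.coprime_iff_gcd_eq_one,
        ← Nat.isCoprime_iff_coprime]
      push_cast
      rw [IsCoprime.mul_right_iff, IsCoprime.add_mul_left_left_iff]
      obtain ⟨k, rfl⟩ := hb'
      rw [IsCoprime.mul_add_left_left_iff]
      exact ⟨fun h => (IsCoprime.mul_left_iff.1 h.2).2,
        fun h => ⟨hbg', IsCoprime.mul_left_iff.2 ⟨hgd, h⟩⟩⟩
    simp only [upsTerm, h1]
    congr 1
    rw [← e2pi_add]
    congr 1
    push_cast
    field_simp
    ring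
  rw [Ups_eq_sum_upsTerm hg hd hgcd hbb, hlcm, Nat.totient_mul hyd]
  simp_rw [hterm]
  rw [← Finset.sum_filter, ← Finset.mul_sum, sum_range_coprime_e2pi_of_coprime hd had]
  have : (Nat.totient y : ℂ) ≠ 0 := by exact_mod_cast (Nat.totient_pos.2 hy).ne'
  have h3 : (Nat.totient d : ℂ) ≠ 0 := by exact_mod_cast (Nat.totient_pos.2 hd).ne'
  push_cast
  field_simp

lemma sum_divisors_coprime_fractions {M : Type*} [AddCommMonoid M] {y d : ℕ} (hy : 0 < y)
    (hd : 0 < d) (hyd : Nat.gcd y d = 1) (f : ℝ → M) :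
    ∑ g ∈ y.divisors, ∑ a ∈ (Finset.Icc 1 (g * d)).filter (fun a => Nat.gcd a (g * d) = 1),
        f (a / ((g * d : ℕ) : ℝ)) =
      ∑ c ∈ (Finset.Icc 1 (y * d)).filter (fun c => Nat.gcd c d = 1),
        f (c / ((y * d : ℕ) : ℝ)) := by
  rw [Finset.sum_sigma']
  have hk : ∀ g a k : ℕ, 0 < k → g * k = y → Nat.gcd a (g * d) = 1 → Nat.gcd (a * k) y = k := by
    intro g a k hk h h2
    rw [← h, Nat.gcd_mul_right, Nat.Coprime.coprime_mul_right_right h2, one_mul]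
  refine Finset.sum_bij (fun p _ => p.2 * (y / p.1)) ?_ ?_ ?_ ?_
  · rintro ⟨g, a⟩ h
    simp only [Finset.mem_sigma, Finset.mem_filter, Finset.mem_Icc, Nat.mem_divisors] at h ⊢
    obtain ⟨⟨⟨k, rfl⟩, hy0⟩, ⟨h1, h2⟩, h3⟩ := h
    have hg : 0 < g := Nat.pos_of_mul_pos_right hy
    have hk0 : 0 < k := Nat.pos_of_mul_pos_left hy
    rw [Nat.mul_div_cancel_left _ hg]
    refine ⟨⟨Nat.mul_pos h1 hk0, ?_⟩, ?_⟩
    · calc a * k ≤ g * d * k := Nat.mul_le_mul_right _ h2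
        _ = g * k * d := by ring
    · exact Nat.Coprime.mul_left (Nat.Coprime.coprime_mul_left_right h3)
        (Nat.Coprime.coprime_mul_left hyd)
  · rintro ⟨g, a⟩ h ⟨g', a'⟩ h' he
    simp only [Finset.mem_sigma, Finset.mem_filter, Finset.mem_Icc, Nat.mem_divisors] at h h' he
    obtain ⟨⟨⟨k, hgk⟩, hy0⟩, -, h3⟩ := h
    obtain ⟨⟨⟨k', hgk'⟩, -⟩, -, h3'⟩ := h'
    have hg : 0 < g := Nat.pos_of_ne_zero (by rintro rfl; simp at hgk; omega)
    have hg' : 0 < g' := Nat.pos_of_ne_zero (by rintro rfl; simp at hgk'; omega)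
    have hk0 : 0 < k := Nat.pos_of_ne_zero (by rintro rfl; simp at hgk; omega)
    have hk0' : 0 < k' := Nat.pos_of_ne_zero (by rintro rfl; simp at hgk'; omega)
    have e1 : y / g = k := by rw [hgk, Nat.mul_div_cancel_left _ hg]
    have e2 : y / g' = k' := by rw [hgk', Nat.mul_div_cancel_left _ hg']
    rw [e1, e2] at he
    have h4 := hk g a k hk0 hgk.symm h3
    rw [he, hk g' a' k' hk0' hgk'.symm h3'] at h4
    subst h4
    have h5 : a = a' := Nat.eq_of_mul_eq_mul_right hk0 he
    have h6 : g = g' := Nat.eq_of_mul_eq_mul_right hk0 (by rw [← hgk, ← hgk'])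
    subst h5 h6
    rfl
  · intro c hc
    simp only [Finset.mem_filter, Finset.mem_Icc] at hc
    obtain ⟨⟨h1, h2⟩, h3⟩ := hc
    have hk0 : 0 < Nat.gcd c y := Nat.gcd_pos_of_pos_right _ hy
    have hcop := Nat.coprime_div_gcd_div_gcd hk0
    obtain ⟨a, ha⟩ : Nat.gcd c y ∣ c := Nat.gcd_dvd_left _ _
    obtain ⟨g, hg⟩ : Nat.gcd c y ∣ y := Nat.gcd_dvd_right _ _
    set k := Nat.gcd c y with hkdef
    have e1 : c / k = a := by rw [ha, Nat.mul_div_cancel_left _ hk0]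
    have e2 : y / k = g := by rw [hg, Nat.mul_div_cancel_left _ hk0]
    rw [e1, e2] at hcop
    have hg0 : 0 < g := Nat.pos_of_ne_zero (by rintro rfl; simp at hg; omega)
    have e3 : y / g = k := by rw [hg, Nat.mul_div_cancel _ hg0]
    refine ⟨⟨g, a⟩, ?_, ?_⟩
    · simp only [Finset.mem_sigma, Finset.mem_filter, Finset.mem_Icc, Nat.mem_divisors]
      refine ⟨⟨⟨k, by rw [hg]; ring⟩, hy.ne'⟩, ⟨?_, ?_⟩, ?_⟩
      · exact Nat.pos_of_ne_zero (by rintro rfl; simp at ha; omega)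
      · refine Nat.le_of_mul_le_mul_left ?_ hk0
        calc k * a = c := ha.symm
          _ ≤ y * d := h2
          _ = k * (g * d) := by rw [← mul_assoc, ← hg]
      · exact Nat.Coprime.mul_right hcop
          (Nat.Coprime.coprime_dvd_left ⟨k, by rw [mul_comm]; exact ha⟩ h3)
    · simp only [e3]
      rw [mul_comm]; exact ha.symm
  · rintro ⟨g, a⟩ h
    simp only [Finset.mem_sigma, Nat.mem_divisors] at h
    obtain ⟨⟨⟨k, rfl⟩, hy0⟩, -⟩ := h
    have hg : 0 < g := Nat.pos_of_mul_pos_right hy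
    have hk0 : 0 < k := Nat.pos_of_mul_pos_left hy
    have : (g : ℝ) ≠ 0 := by exact_mod_cast hg.ne'
    have : (k : ℝ) ≠ 0 := by exact_mod_cast hk0.ne'
    have : (d : ℝ) ≠ 0 := by exact_mod_cast hd.ne'
    simp only [Nat.mul_div_cancel_left _ hg]
    congr 1
    push_cast
    field_simp

/-- The sum of all the characters of height `d`, weighted by `Ups`. -/
def charSum (y : ℕ) (b : ℤ) (d : ℕ) (x : ℤ) : ℂ :=
  ∑ g ∈ y.divisors, ∑ a ∈ (Finset.Icc 1 (g * d)).filter (fun a => Nat.gcd a (g * d) = 1),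
    Ups y b a (g * d) * e2pi (x * a / ((g * d : ℕ) : ℝ))

lemma exists_int_crt {y d : ℕ} (hyd : Nat.gcd y d = 1) (b : ℤ) :
    ∃ b' : ℤ, (y : ℤ) ∣ b' - b ∧ (d : ℤ) ∣ b' := by
  obtain ⟨s, t, hst⟩ := Nat.isCoprime_iff_coprime.2 hyd
  exact ⟨b * (t * d), ⟨-(b * s), by linear_combination b * hst⟩, ⟨b * t, by ring⟩⟩

open ArithmeticFunction in
lemma charSum_eq {y d : ℕ} (hy : 0 < y) (hd : 0 < d) (hyd : Nat.gcd y d = 1) {b b' : ℤ}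
    (hb : Int.gcd b y = 1) (hbb : (y : ℤ) ∣ b' - b) (hb' : (d : ℤ) ∣ b') (x : ℤ) :
    charSum y b d x = (moebius d : ℂ) / Nat.totient d * ∑ e ∈ d.divisors, (moebius e : ℂ) *
        if ((y * d / e : ℕ) : ℤ) ∣ x - b' then ((y * d / e : ℕ) : ℂ) else 0 := by
  have hn : 0 < y * d := Nat.mul_pos hy hd
  have hn' : ((y * d : ℕ) : ℝ) ≠ 0 := by exact_mod_cast hn.ne'
  have h1 : charSum y b d x = (moebius d : ℂ) / Nat.totient d *
      ∑ g ∈ y.divisors, ∑ a ∈ (Finset.Icc 1 (g * d)).filter (fun a => Nat.gcd a (g * d) = 1),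
        e2pi (((x - b' : ℤ) : ℝ) * (a / ((g * d : ℕ) : ℝ))) := by
    rw [charSum, Finset.mul_sum]
    refine Finset.sum_congr rfl fun g hg => ?_
    rw [Finset.mul_sum]
    refine Finset.sum_congr rfl fun a ha => ?_
    have hgy := Nat.dvd_of_mem_divisors hg
    rw [Ups_eq_moebius (Nat.pos_of_mem_divisors hg) hd hgy hy hyd hb ?_ hb'
      (by rw [Int.gcd_natCast_natCast]; exact (Finset.mem_filter.1 ha).2), mul_assoc, ← e2pi_add]
    · congr 2
      push_cast
      ring
    · exact Int.modEq_iff_dvd.2 (dvd_trans (by exact_mod_cast hgy) hbb)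
  rw [h1, sum_divisors_coprime_fractions hy hd hyd
    (fun u => e2pi (((x - b' : ℤ) : ℝ) * u)), ← sum_range_coprime_e2pi hn (dvd_mul_left d y)]
  congr 1
  set H : ℤ → ℂ := fun c => if Int.gcd c d = 1 then
    e2pi (((x - b' : ℤ) : ℝ) * (c / ((y * d : ℕ) : ℝ))) else 0 with hH
  have hper : ∀ m n : ℤ, ((1 * (y * d) : ℕ) : ℤ) ∣ m - n → H m = H n := by
    rintro m n ⟨k, hk⟩
    rw [one_mul] at hk
    obtain rfl : m = n + (y * d : ℕ) * k := by linear_combination hk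
    have hgcd : Int.gcd (n + (y * d : ℕ) * k) d = Int.gcd n d := by
      rw [show n + (y * d : ℕ) * k = n + d * (y * k) by push_cast; ring]
      exact Int.gcd_add_mul_left_left _ _ _
    simp only [hH, hgcd]
    congr 1
    refine e2pi_congr ⟨(x - b') * k, ?_⟩
    push_cast at hn' ⊢
    field_simp
  have h2 := sum_Icc_modEq_eq_sum_range one_pos hn 0 H hper
  simp only [Nat.cast_one, Int.emod_one, one_mul, Finset.filter_true, zero_add, hH,
    Int.gcd_natCast_natCast] at h2
  rw [Finset.sum_filter, Finset.sum_filter]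
  simp only [mul_div_assoc, ← Int.cast_natCast (R := ℝ)] at h2 ⊢
  exact h2

lemma charSum_eq_zero {y d : ℕ} (hy : 0 < y) (hd : 0 < d) (hyd : Nat.gcd y d = 1) {b : ℤ}
    (hb : Int.gcd b y = 1) (hsq : ¬ Squarefree d) (x : ℤ) : charSum y b d x = 0 := by
  obtain ⟨b', h1, h2⟩ := exists_int_crt hyd b
  rw [charSum_eq hy hd hyd hb h1 h2, ArithmeticFunction.moebius_eq_zero_of_not_squarefree hsq]
  simp

lemma norm_moebius_le (d : ℕ) : ‖(ArithmeticFunction.moebius d : ℂ)‖ ≤ 1 := by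
  rw [Complex.norm_intCast]
  exact_mod_cast ArithmeticFunction.abs_moebius_le_one

lemma norm_charSum_le {y d : ℕ} (hy : 0 < y) (hd : 0 < d) (hyd : Nat.gcd y d = 1) {b b' : ℤ}
    (hb : Int.gcd b y = 1) (hbb : (y : ℤ) ∣ b' - b) (hb' : (d : ℤ) ∣ b') (x : ℤ) :
    ‖charSum y b d x‖ ≤ (1 / (Nat.totient d : ℝ)) * ∑ e ∈ d.divisors,
        if ((y * d / e : ℕ) : ℤ) ∣ x - b' then ((y * d / e : ℕ) : ℝ) else 0 := by
  rw [charSum_eq hy hd hyd hb hbb hb', norm_mul, norm_div, Complex.norm_natCast]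
  gcongr
  · exact norm_moebius_le d
  · refine (norm_sum_le _ _).trans (Finset.sum_le_sum fun e _ => ?_)
    rw [norm_mul]
    split_ifs
    · rw [Complex.norm_natCast]
      exact mul_le_of_le_one_left (by positivity) (norm_moebius_le e)
    · simp

lemma charSum_add_mul {y d : ℕ} (hd : 0 < d) (b x k : ℤ) :
    charSum y b d (x + (y * d : ℕ) * k) = charSum y b d x := by
  refine Finset.sum_congr rfl fun g hg => Finset.sum_congr rfl fun a _ => ?_
  congr 1
  have hg0 := Nat.pos_of_mem_divisors hg
  obtain ⟨h, rfl⟩ := Nat.dvd_of_mem_divisors hg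
  have : (g : ℝ) ≠ 0 := by exact_mod_cast hg0.ne'
  have : (d : ℝ) ≠ 0 := by exact_mod_cast hd.ne'
  refine e2pi_congr ⟨h * k * a, ?_⟩
  push_cast
  field_simp

/-- An integrable weight of total mass `O(1)`, living at scale `A`. -/
def decayWeight (A u : ℝ) : ℝ := A / (A + |u|) ^ 2

lemma decayWeight_nonneg {A : ℝ} (hA : 0 ≤ A) (u : ℝ) : 0 ≤ decayWeight A u := by
  unfold decayWeight; positivity

lemma sum_range_inv_sq_le {B : ℝ} (hB : 1 ≤ B) (n : ℕ) :
    ∑ t ∈ Finset.range n, B / (B + t) ^ 2 ≤ 2 := by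
  have h : ∀ n : ℕ, ∑ t ∈ Finset.range (n + 1), B / (B + t) ^ 2 ≤ 2 - B / (B + n) := by
    intro n
    have hB0 : 0 < B := by linarith
    induction n with
    | zero =>
      simp only [zero_add, Finset.range_one, Finset.sum_singleton, Nat.cast_zero, add_zero,
        div_self hB0.ne']
      rw [div_le_iff₀ (by positivity)]
      nlinarith
    | succ n ih =>
      rw [Finset.sum_range_succ]
      have h1 : B / (B + (n + 1 : ℕ)) ^ 2 ≤ B / (B + n) - B / (B + (n + 1 : ℕ)) := by
        push_cast
        have hn : (0 : ℝ) ≤ n := n.cast_nonneg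
        rw [div_sub_div _ _ (by positivity) (by positivity),
          div_le_div_iff₀ (by positivity) (by positivity)]
        have : 0 ≤ B * (B + (n + 1)) := by positivity
        nlinarith
      linarith
  rcases n with _ | n
  · simp
  · refine (h n).trans ?_
    have : 0 ≤ B / (B + n) := by positivity
    linarith

lemma tsum_decayWeight_le {A : ℝ} {m : ℕ} (hm : 0 < m) (hA : (m : ℝ) ≤ A) (j : ℤ) :
    ∑' t : ℤ, ENNReal.ofReal (decayWeight A ((j + m * t : ℤ) : ℝ)) ≤ ENNReal.ofReal (4 / m) := by
  have hm0 : (0 : ℝ) < m := by exact_mod_cast hm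
  have hmz : (0 : ℤ) < m := by exact_mod_cast hm
  have hA0 : 0 < A := lt_of_lt_of_le hm0 hA
  have hshift : ∑' t : ℤ, ENNReal.ofReal (decayWeight A ((j + m * t : ℤ) : ℝ)) =
      ∑' t : ℤ, ENNReal.ofReal (decayWeight A ((j % m + m * t : ℤ) : ℝ)) := by
    rw [← (Equiv.subRight (j / m)).tsum_eq
      fun t : ℤ => ENNReal.ofReal (decayWeight A ((j + m * t : ℤ) : ℝ))]
    refine tsum_congr fun t => ?_
    congr 3
    change j + m * (t - j / m) = j % m + m * t
    linear_combination -Int.emod_add_mul_ediv j m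
  rw [hshift]
  have h0 := Int.emod_nonneg j hmz.ne'
  have h1 := Int.emod_lt_of_pos j hmz
  set θ := j % (m : ℤ)
  have hB : 1 ≤ A / m := (one_le_div hm0).2 hA
  have hbound : ∀ (t : ℕ) (u : ℤ), (m : ℝ) * t ≤ |(u : ℝ)| →
      decayWeight A u ≤ (1 / m) * ((A / m) / (A / m + t) ^ 2) := by
    intro t u hu
    have : (1 / m) * ((A / m) / (A / m + t) ^ 2) = A / (A + m * t) ^ 2 := by
      have : (0 : ℝ) ≤ t := t.cast_nonneg
      field_simp
    rw [this, decayWeight]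
    gcongr
  have hhalf : ∀ f : ℕ → ℤ, (∀ t, (m : ℝ) * t ≤ |(f t : ℝ)|) →
      ∑' t : ℕ, ENNReal.ofReal (decayWeight A (f t)) ≤ ENNReal.ofReal (2 / m) := by
    intro f hf
    refine ENNReal.tsum_le_of_sum_range_le fun n => ?_
    rw [← ENNReal.ofReal_sum_of_nonneg fun t _ => decayWeight_nonneg hA0.le _]
    refine ENNReal.ofReal_le_ofReal ?_
    refine (Finset.sum_le_sum fun t _ => hbound t (f t) (hf t)).trans ?_
    rw [← Finset.mul_sum, div_eq_mul_one_div 2, mul_comm]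
    exact mul_le_mul_of_nonneg_right (sum_range_inv_sq_le hB n) (by positivity)
  rw [tsum_of_nat_of_neg_add_one ENNReal.summable ENNReal.summable,
    show (4 : ℝ) / m = 2 / m + 2 / m by ring, ENNReal.ofReal_add (by positivity) (by positivity)]
  have hθ0 : (0 : ℝ) ≤ θ := by exact_mod_cast h0
  have hθ1 : (θ : ℝ) < m := by exact_mod_cast h1
  refine add_le_add (hhalf _ fun t => ?_) (hhalf _ fun t => ?_)
  · push_cast
    exact le_trans (by linarith) (le_abs_self _)
  · push_cast
    refine le_trans ?_ (neg_le_abs _)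
    linarith

lemma tsum_dvd_decayWeight_le {A : ℝ} {m : ℕ} (hm : 0 < m) (hA : (m : ℝ) ≤ A) (j : ℤ) :
    ∑' u : ℤ, (if (m : ℤ) ∣ u - j then ENNReal.ofReal (decayWeight A u) else 0) ≤
      ENNReal.ofReal (4 / m) := by
  refine le_trans (le_of_eq ?_) (tsum_decayWeight_le hm hA j)
  have hinj : Function.Injective fun t : ℤ => j + m * t := fun s t h => by
    have hmz : (m : ℤ) ≠ 0 := by exact_mod_cast hm.ne'
    exact mul_left_cancel₀ hmz (add_left_cancel h)
  rw [← hinj.tsum_eq]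
  · refine tsum_congr fun t => ?_
    simp
  · intro u hu
    simp only [Function.mem_support, ne_eq, ite_eq_right_iff, Classical.not_imp] at hu
    obtain ⟨⟨t, ht⟩, -⟩ := hu
    exact ⟨t, by linear_combination -ht⟩

lemma tsum_charSum_mul_decayWeight_le {y d : ℕ} (hy : 0 < y) (hd : 0 < d)
    (hyd : Nat.gcd y d = 1) {b : ℤ} (hb : Int.gcd b y = 1) :
    ∑' u : ℤ, ENNReal.ofReal (‖charSum y b d u‖ * decayWeight (((y * d : ℕ) : ℝ) ^ 2) u) ≤
      ENNReal.ofReal (if Squarefree d then 4 * (d.divisors.card / Nat.totient d) else 0) := by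
  have hn : 0 < y * d := Nat.mul_pos hy hd
  split_ifs with hsq
  swap
  · simp [charSum_eq_zero hy hd hyd hb hsq]
  obtain ⟨b', h1, h2⟩ := exists_int_crt hyd b
  set A : ℝ := ((y * d : ℕ) : ℝ) ^ 2
  have hA : 0 ≤ A := by positivity
  have hm : ∀ e ∈ d.divisors, 0 < y * d / e ∧ ((y * d / e : ℕ) : ℝ) ≤ A := by
    intro e he
    have h3 := Nat.dvd_of_mem_divisors he
    refine ⟨Nat.div_pos (Nat.le_of_dvd hn (h3.mul_left y)) (Nat.pos_of_mem_divisors he), ?_⟩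
    have h4 : y * d / e ≤ (y * d) ^ 2 := (Nat.div_le_self _ _).trans (Nat.le_self_pow two_ne_zero _)
    calc ((y * d / e : ℕ) : ℝ) ≤ (((y * d) ^ 2 : ℕ) : ℝ) := by exact_mod_cast h4
      _ = A := by rw [Nat.cast_pow]
  calc ∑' u : ℤ, ENNReal.ofReal (‖charSum y b d u‖ * decayWeight A u)
      ≤ ∑' u : ℤ, ∑ e ∈ d.divisors, ENNReal.ofReal (1 / Nat.totient d) *
          (ENNReal.ofReal ((y * d / e : ℕ) : ℝ) *
            if ((y * d / e : ℕ) : ℤ) ∣ u - b' then ENNReal.ofReal (decayWeight A u) else 0) := by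
        refine ENNReal.tsum_le_tsum fun u => ?_
        refine (ENNReal.ofReal_le_ofReal (mul_le_mul_of_nonneg_right
          (norm_charSum_le hy hd hyd hb h1 h2 u) (decayWeight_nonneg hA _))).trans_eq ?_
        rw [← Finset.mul_sum, mul_assoc, ENNReal.ofReal_mul (by positivity), Finset.sum_mul,
          ENNReal.ofReal_sum_of_nonneg fun e _ => mul_nonneg (by split_ifs <;> positivity)
            (decayWeight_nonneg hA _)]
        congr 1
        refine Finset.sum_congr rfl fun e _ => ?_
        split_ifs
        · rw [ENNReal.ofReal_mul (by positivity)]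
        · simp
    _ = ∑ e ∈ d.divisors, ENNReal.ofReal (1 / Nat.totient d) *
          (ENNReal.ofReal ((y * d / e : ℕ) : ℝ) * ∑' u : ℤ,
            if ((y * d / e : ℕ) : ℤ) ∣ u - b' then ENNReal.ofReal (decayWeight A u) else 0) := by
        rw [Summable.tsum_finsetSum fun _ _ => ENNReal.summable]
        simp_rw [ENNReal.tsum_mul_left]
    _ ≤ ∑ e ∈ d.divisors, ENNReal.ofReal (1 / Nat.totient d) * ENNReal.ofReal 4 := by
        refine Finset.sum_le_sum fun e he => ?_
        obtain ⟨h3, h4⟩ := hm e he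
        have h5 : (0 : ℝ) < ((y * d / e : ℕ) : ℝ) := by exact_mod_cast h3
        refine mul_le_mul_right
          ((mul_le_mul_right (tsum_dvd_decayWeight_le h3 h4 b') _).trans_eq ?_) _
        rw [← ENNReal.ofReal_mul h5.le, mul_div_cancel₀ _ h5.ne']
    _ = _ := by
        rw [Finset.sum_const, nsmul_eq_mul, ← ENNReal.ofReal_mul (by positivity),
          ← ENNReal.ofReal_natCast, ← ENNReal.ofReal_mul (by positivity)]
        congr 1
        ring

lemma hasDerivAt_e2pi_mul (v s : ℝ) :
    HasDerivAt (fun s : ℝ => e2pi (v * s)) (2 * Real.pi * Complex.I * v * e2pi (v * s)) s := by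
  have h1 : HasDerivAt (fun s : ℝ => (2 * Real.pi * Complex.I * v : ℂ) * (s : ℂ))
      (2 * Real.pi * Complex.I * v * 1) s :=
    (Complex.ofRealCLM.hasDerivAt (x := s)).const_mul _
  have h2 := h1.cexp
  simp only [e2pi]
  convert h2 using 1
  · funext t; congr 1; push_cast; ring
  · rw [mul_one, mul_comm]; congr 2; push_cast; ring

lemma integral_mul_e2pi_by_parts {f f' : ℝ → ℝ} (hf : ∀ s, HasDerivAt f (f' s) s)
    (hf' : Continuous f') {a b : ℝ} (ha : f a = 0) (hb : f b = 0) {v : ℝ} :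
    (2 * Real.pi * Complex.I * v) * ∫ s in a..b, (f s : ℂ) * e2pi (v * s) =
      -∫ s in a..b, (f' s : ℂ) * e2pi (v * s) := by
  have h := intervalIntegral.integral_mul_deriv_eq_deriv_mul (a := a) (b := b)
    (u := fun s => (f s : ℂ)) (u' := fun s => (f' s : ℂ)) (v := fun s => e2pi (v * s))
    (v' := fun s => 2 * Real.pi * Complex.I * v * e2pi (v * s))
    (fun s _ => (hf s).ofReal_comp) (fun s _ => hasDerivAt_e2pi_mul v s)
    (Continuous.intervalIntegrable (by fun_prop) _ _)
    (Continuous.intervalIntegrable (by fun_prop) _ _)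
  simp only [ha, hb, Complex.ofReal_zero, zero_mul, sub_zero, zero_sub] at h
  rw [← h, ← intervalIntegral.integral_const_mul]
  congr 1
  funext s
  ring

lemma exists_norm_integral_bump_le {χ : ℝ → ℝ} (hχs : ContDiff ℝ (⊤ : ℕ∞) χ)
    (hχr : ∀ x : ℝ, χ x ∈ Set.Icc (0 : ℝ) 1)
    (hχ0 : ∀ x : ℝ, x ∉ Set.Icc (-(1/4) : ℝ) (1/4) → χ x = 0) :
    ∃ C : ℝ, 0 < C ∧ ∀ v : ℝ,
      ‖∫ s in (-(1 / 2) : ℝ)..(1 / 2), (χ s : ℂ) * e2pi (v * s)‖ ≤ C / (1 + |v|) ^ 2 := by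
  have hs1 : ContDiff ℝ (⊤ : ℕ∞) (deriv χ) := ((contDiff_infty_iff_deriv).1 hχs).2
  have hs2 : ContDiff ℝ (⊤ : ℕ∞) (deriv (deriv χ)) := ((contDiff_infty_iff_deriv).1 hs1).2
  have hd1 : ∀ s, HasDerivAt χ (deriv χ s) s := fun s =>
    ((contDiff_infty_iff_deriv).1 hχs).1.differentiableAt.hasDerivAt
  have hd2 : ∀ s, HasDerivAt (deriv χ) (deriv (deriv χ) s) s := fun s =>
    ((contDiff_infty_iff_deriv).1 hs1).1.differentiableAt.hasDerivAt
  have hz : ∀ s : ℝ, s ∉ Set.Icc (-(1/4) : ℝ) (1/4) → deriv χ s = 0 := by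
    intro s hs
    have h1 : χ =ᶠ[nhds s] fun _ => 0 := by
      filter_upwards [isClosed_Icc.isOpen_compl.mem_nhds hs] with t ht using hχ0 t ht
    rw [h1.deriv_eq, deriv_const]
  have hn1 : (-(1 / 2) : ℝ) ∉ Set.Icc (-(1/4) : ℝ) (1/4) := by norm_num
  have hn2 : (1 / 2 : ℝ) ∉ Set.Icc (-(1/4) : ℝ) (1/4) := by norm_num
  obtain ⟨M, hM⟩ := isCompact_Icc.exists_bound_of_continuousOn
    (s := Set.Icc (-(1 / 2) : ℝ) (1 / 2)) hs2.continuous.continuousOn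
  have hM0 : 0 ≤ M := (norm_nonneg _).trans (hM 0 (by norm_num))
  refine ⟨4 * (1 + M), by positivity, fun v => ?_⟩
  have hv1 : 0 ≤ |v| := abs_nonneg v
  rw [le_div_iff₀ (by positivity)]
  set I := ∫ s in (-(1 / 2) : ℝ)..(1 / 2), (χ s : ℂ) * e2pi (v * s) with hI
  have hb1 : ‖I‖ ≤ 1 := by
    have := intervalIntegral.norm_integral_le_of_norm_le_const (a := (-(1 / 2) : ℝ)) (b := 1 / 2)
      (C := 1) (f := fun s => (χ s : ℂ) * e2pi (v * s)) fun s _ => by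
        rw [norm_mul, norm_e2pi, mul_one, Complex.norm_real, Real.norm_eq_abs,
          abs_of_nonneg (hχr s).1]
        exact (hχr s).2
    norm_num at this
    exact this
  have hb2 : v ^ 2 * ‖I‖ ≤ M := by
    have e1 := integral_mul_e2pi_by_parts hd1 hs1.continuous (hχ0 _ hn1) (hχ0 _ hn2) (v := v)
    have e2 := integral_mul_e2pi_by_parts hd2 hs2.continuous (hz _ hn1) (hz _ hn2) (v := v)
    have e3 : (2 * Real.pi * Complex.I * v) ^ 2 * I =
        ∫ s in (-(1 / 2) : ℝ)..(1 / 2), ((deriv (deriv χ) s : ℝ) : ℂ) * e2pi (v * s) := by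
      rw [sq, mul_assoc, hI, e1, mul_neg, e2, neg_neg]
    have e4 := congrArg norm e3
    have e5 := intervalIntegral.norm_integral_le_of_norm_le_const (a := (-(1 / 2) : ℝ))
      (b := 1 / 2) (C := M) (f := fun s => ((deriv (deriv χ) s : ℝ) : ℂ) * e2pi (v * s))
      fun s hs => by
        rw [norm_mul, norm_e2pi, mul_one, Complex.norm_real]
        rw [Set.uIoc_of_le (by norm_num)] at hs
        exact hM s (Set.Ioc_subset_Icc_self hs)
    rw [← e4, norm_mul, norm_pow, norm_mul, norm_mul, norm_mul, Complex.norm_I, Complex.norm_real,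
      Complex.norm_real, Real.norm_eq_abs, Real.norm_eq_abs, abs_of_pos Real.pi_pos] at e5
    norm_num [mul_pow] at e5
    have hpi : 1 ≤ Real.pi ^ 2 := by nlinarith [Real.pi_gt_three]
    have : 0 ≤ v ^ 2 * ‖I‖ := by positivity
    nlinarith
  have h0 : 0 ≤ ‖I‖ := norm_nonneg _
  rw [← sq_abs] at hb2
  nlinarith [sq_nonneg (1 - |v|)]

/-- The Fourier coefficients of the bump `χ(A·)`. -/
def bumpKer (χ : ℝ → ℝ) (A u : ℝ) : ℂ :=
  ∫ η in (-(1 / 2) : ℝ)..(1 / 2), (χ (A * η) : ℂ) * e2pi (u * η)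

/-- The Fourier coefficients of the half bump `χ(A·) 1_{[0,1/2]}`. -/
def halfBumpKer (χ : ℝ → ℝ) (A u : ℝ) : ℂ :=
  ∫ η in (0 : ℝ)..(1 / 2), (χ (A * η) : ℂ) * e2pi (u * η)

lemma integral_eq_integral_of_eq_zero_off {f : ℝ → ℂ} {δ a b : ℝ} (hf : ∀ x, δ < |x| → f x = 0)
    (ha : a < -δ) (hb : δ ≤ b) : ∫ x in a..b, f x = ∫ x, f x := by
  refine intervalIntegral.integral_eq_integral_of_support_subset fun x hx => ?_
  have h : |x| ≤ δ := by
    by_contra h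
    exact hx (hf x (not_le.1 h))
  rw [abs_le] at h
  exact ⟨by linarith, by linarith⟩

lemma bump_mul_eq_zero {χ : ℝ → ℝ} (hχ0 : ∀ x : ℝ, x ∉ Set.Icc (-(1/4) : ℝ) (1/4) → χ x = 0)
    {A : ℝ} (hA : 0 < A) {x : ℝ} (hx : 1 / (4 * A) < |x|) : χ (A * x) = 0 := by
  refine hχ0 _ fun h => ?_
  rw [Set.mem_Icc, ← abs_le, abs_mul, abs_of_pos hA] at h
  rw [div_lt_iff₀ (by positivity)] at hx
  linarith

lemma exists_norm_bumpKer_le {χ : ℝ → ℝ} (hχs : ContDiff ℝ (⊤ : ℕ∞) χ)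
    (hχr : ∀ x : ℝ, χ x ∈ Set.Icc (0 : ℝ) 1)
    (hχ0 : ∀ x : ℝ, x ∉ Set.Icc (-(1/4) : ℝ) (1/4) → χ x = 0) :
    ∃ C : ℝ, 0 < C ∧ ∀ A u : ℝ, 1 ≤ A → ‖bumpKer χ A u‖ ≤ C * decayWeight A u := by
  obtain ⟨C, hC, h⟩ := exists_norm_integral_bump_le hχs hχr hχ0
  refine ⟨C, hC, fun A u hA => ?_⟩
  have hA0 : 0 < A := by linarith
  have h1 : bumpKer χ A u =
      (A⁻¹ : ℝ) • ∫ s in (-(1 / 2) : ℝ)..(1 / 2), (χ s : ℂ) * e2pi (u / A * s) := by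
    have h2 := intervalIntegral.integral_comp_mul_left (a := (-(1 / 2) : ℝ)) (b := 1 / 2)
      (fun s => (χ s : ℂ) * e2pi (u / A * s)) hA0.ne'
    have h3 : bumpKer χ A u = ∫ η in (-(1 / 2) : ℝ)..(1 / 2),
        (χ (A * η) : ℂ) * e2pi (u / A * (A * η)) := by
      rw [bumpKer]
      congr 1
      funext η
      congr 2
      field_simp
    rw [h3, h2]
    congr 1
    have hz : ∀ x : ℝ, 1 / 4 < |x| → (χ x : ℂ) * e2pi (u / A * x) = 0 := by
      intro x hx
      rw [hχ0 x fun h => ?_, Complex.ofReal_zero, zero_mul]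
      rw [Set.mem_Icc, ← abs_le] at h
      linarith
    rw [integral_eq_integral_of_eq_zero_off hz (by linarith) (by linarith),
      integral_eq_integral_of_eq_zero_off hz (by norm_num) (by norm_num)]
  rw [h1, norm_smul, Real.norm_of_nonneg (by positivity)]
  refine (mul_le_mul_of_nonneg_left (h _) (by positivity)).trans_eq ?_
  rw [decayWeight, abs_div, abs_of_pos hA0]
  have : 0 ≤ |u| := abs_nonneg u
  field_simp

lemma Lker_eq_integral {χ : ℝ → ℝ} (hχ : Continuous χ) (y : ℕ) (b : ℤ) (N : ℝ) (a q : ℕ) (x : ℤ) :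
    Lker χ y b N a q x = Ups y b a q * e2pi (x * a / q) *
      (((1 / (N / (Nat.lcm y q : ℝ)) : ℝ) : ℂ) * ∑ n ∈ Finset.range ⌈N / (Nat.lcm y q : ℝ)⌉₊,
        ∫ η in (0 - (a : ℝ) / q)..(1 - (a : ℝ) / q), (χ ((Nat.lcm y q : ℝ) ^ 2 * η) : ℂ) *
          e2pi (((x - Nat.lcm y q * n : ℤ) : ℝ) * η)) := by
  set ℓ : ℝ := (Nat.lcm y q : ℝ) with hℓ
  set G : ℝ → ℂ := fun η => ((1 / (N / ℓ) : ℝ) : ℂ) * ∑ n ∈ Finset.range ⌈N / ℓ⌉₊,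
    (χ (ℓ ^ 2 * η) : ℂ) * e2pi (((x - Nat.lcm y q * n : ℤ) : ℝ) * η) with hG
  have h1 : ∀ ξ : ℝ, Lhat χ y b N a q ξ * e2pi ((x : ℝ) * ξ) =
      Ups y b a q * e2pi (x * a / q) * G (ξ - a / q) := by
    intro ξ
    simp only [Lhat, Mhat, hG, ← hℓ, Finset.mul_sum, Finset.sum_mul]
    refine Finset.sum_congr rfl fun n _ => ?_
    have h2 : e2pi (-(n * (ℓ * (ξ - a / q)))) * e2pi (x * ξ) =
        e2pi (x * a / q) * e2pi (((x - Nat.lcm y q * n : ℤ) : ℝ) * (ξ - a / q)) := by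
      rw [← e2pi_add, ← e2pi_add]
      congr 1
      push_cast
      rw [← hℓ]
      ring
    linear_combination (Ups y b a q * ((1 / (N / ℓ) : ℝ) : ℂ) *
      (χ (ℓ ^ 2 * (ξ - a / q)) : ℂ)) * h2
  rw [Lker]
  simp_rw [h1]
  rw [intervalIntegral.integral_const_mul, intervalIntegral.integral_comp_sub_right G]
  congr 1
  rw [hG, intervalIntegral.integral_const_mul, intervalIntegral.integral_finsetSum]
  exact fun n _ => Continuous.intervalIntegrable (by fun_prop) _ _

lemma Lker_eq {χ : ℝ → ℝ} (hχ : Continuous χ)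
    (hχ0 : ∀ x : ℝ, x ∉ Set.Icc (-(1/4) : ℝ) (1/4) → χ x = 0) {y : ℕ} (hy : 0 < y) (b : ℤ) (N : ℝ)
    {a q : ℕ} (ha : 0 < a) (haq : a < q) (x : ℤ) :
    Lker χ y b N a q x = Ups y b a q * e2pi (x * a / q) *
      (((1 / (N / (Nat.lcm y q : ℝ)) : ℝ) : ℂ) * ∑ n ∈ Finset.range ⌈N / (Nat.lcm y q : ℝ)⌉₊,
        bumpKer χ ((Nat.lcm y q : ℝ) ^ 2) ((x - Nat.lcm y q * n : ℤ) : ℝ)) := by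
  rw [Lker_eq_integral hχ]
  congr 2
  refine Finset.sum_congr rfl fun n _ => ?_
  have hq0 : 0 < q := by omega
  have hl0 : 0 < Nat.lcm y q := Nat.lcm_pos hy hq0
  have hqℓ : (q : ℝ) ≤ (Nat.lcm y q : ℝ) := by
    exact_mod_cast Nat.le_of_dvd hl0 (Nat.dvd_lcm_right _ _)
  have hq : (2 : ℝ) ≤ q := by exact_mod_cast (by omega : 2 ≤ q)
  set ℓ : ℝ := (Nat.lcm y q : ℝ)
  have hℓ : 0 < ℓ := by linarith
  have hz : ∀ η : ℝ, 1 / (4 * ℓ ^ 2) < |η| →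
      (χ (ℓ ^ 2 * η) : ℂ) * e2pi (((x - Nat.lcm y q * n : ℤ) : ℝ) * η) = 0 := by
    intro η hη
    rw [bump_mul_eq_zero hχ0 (by positivity) hη, Complex.ofReal_zero, zero_mul]
  have hδ : 1 / (4 * ℓ ^ 2) < 1 / q := by
    refine one_div_lt_one_div_of_lt (by linarith) ?_
    nlinarith
  have hδ2 : 1 / (q : ℝ) ≤ 1 / 2 := one_div_le_one_div_of_le (by norm_num) hq
  have h1 : 1 / (q : ℝ) ≤ a / q := by
    gcongr; exact_mod_cast ha
  have h2 : 1 / (q : ℝ) ≤ 1 - a / q := by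
    rw [le_sub_iff_add_le, ← add_div, div_le_one (by linarith)]
    exact_mod_cast (by omega : 1 + a ≤ q)
  rw [bumpKer, integral_eq_integral_of_eq_zero_off hz (by linarith) (by linarith),
    integral_eq_integral_of_eq_zero_off hz (by linarith) (by linarith)]

lemma integral_neg_one_zero_bump {χ : ℝ → ℝ} (hχ : Continuous χ)
    (hχ0 : ∀ x : ℝ, x ∉ Set.Icc (-(1/4) : ℝ) (1/4) → χ x = 0) {A : ℝ} (hA : 1 ≤ A) (u : ℝ) :
    ∫ η in (-1 : ℝ)..0, (χ (A * η) : ℂ) * e2pi (u * η) = bumpKer χ A u - halfBumpKer χ A u := by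
  set f : ℝ → ℂ := fun η => (χ (A * η) : ℂ) * e2pi (u * η) with hf
  have hfc : Continuous f := by fun_prop
  have hz : ∀ η : ℝ, 1 / (4 * A) < |η| → f η = 0 := by
    intro η hη
    simp only [hf]
    rw [bump_mul_eq_zero hχ0 (by positivity) hη, Complex.ofReal_zero, zero_mul]
  have hδ : 1 / (4 * A) < 1 / 2 := one_div_lt_one_div_of_lt (by norm_num) (by linarith)
  have h1 := intervalIntegral.integral_add_adjacent_intervals
    (hfc.intervalIntegrable (μ := MeasureTheory.volume) (-1) 0) (hfc.intervalIntegrable 0 (1 / 2))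
  have h2 : ∫ η in (-1 : ℝ)..(1 / 2), f η = bumpKer χ A u := by
    rw [bumpKer, integral_eq_integral_of_eq_zero_off hz (by linarith) (by linarith),
      integral_eq_integral_of_eq_zero_off hz (by linarith) (by linarith)]
  rw [← h2, halfBumpKer]
  exact eq_sub_of_add_eq h1

lemma Lker_one_eq {χ : ℝ → ℝ} (hχ : Continuous χ)
    (hχ0 : ∀ x : ℝ, x ∉ Set.Icc (-(1/4) : ℝ) (1/4) → χ x = 0) {y : ℕ} (hy : 0 < y) (b : ℤ) (N : ℝ)
    (x : ℤ) :
    Lker χ y b N 1 1 x = Ups y b 1 1 * e2pi (x * (1 : ℕ) / (1 : ℕ)) *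
      (((1 / (N / y) : ℝ) : ℂ) * ∑ n ∈ Finset.range ⌈N / (y : ℝ)⌉₊,
        bumpKer χ ((y : ℝ) ^ 2) ((x - y * n : ℤ) : ℝ)) -
      ((1 / (N / y) : ℝ) : ℂ) * ∑ n ∈ Finset.range ⌈N / (y : ℝ)⌉₊,
        halfBumpKer χ ((y : ℝ) ^ 2) ((x - y * n : ℤ) : ℝ) := by
  have hU : Ups y b 1 1 = 1 := by
    have h1 : (Nat.totient y : ℂ) ≠ 0 := by exact_mod_cast (Nat.totient_pos.2 hy).ne'
    simp only [Ups, Nat.lcm_one_right, div_self h1, Nat.gcd_one_right, Nat.cast_one, Int.emod_one,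
      and_self, Finset.filter_true, Finset.Icc_self, Finset.sum_singleton, one_mul]
    exact e2pi_eq_one_iff.2 ⟨-1, by norm_num⟩
  have he : e2pi (x * (1 : ℕ) / (1 : ℕ)) = 1 := e2pi_eq_one_iff.2 ⟨x, by simp⟩
  have hy1 : (1 : ℝ) ≤ (y : ℝ) ^ 2 := one_le_pow₀ (by exact_mod_cast hy)
  rw [Lker_eq_integral hχ, Nat.lcm_one_right, Nat.cast_one, hU, he, one_mul, one_mul, one_mul,
    ← mul_sub, ← Finset.sum_sub_distrib]
  simp only [Nat.cast_one, div_one, sub_self, zero_sub, integral_neg_one_zero_bump hχ hχ0 hy1]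

/-- The average of a kernel `k` over `⌈N/ℓ⌉` steps of length `ℓ`. -/
def stepAvg (N : ℕ) (ℓ : ℕ) (k : ℤ → ℂ) (x : ℤ) : ℂ :=
  ((1 / ((N : ℝ) / (ℓ : ℝ)) : ℝ) : ℂ) * ∑ n ∈ Finset.range ⌈(N : ℝ) / (ℓ : ℝ)⌉₊, k (x - ℓ * n)

/-- The heights below `Q` of denominators on which `Ups` does not vanish. -/
def heights (y : ℕ) (Q : ℝ) : Finset ℕ :=
  (Finset.range ⌈Q⌉₊).filter fun d => 0 < d ∧ Nat.gcd y d = 1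

lemma mem_heights {y : ℕ} {Q : ℝ} {d : ℕ} :
    d ∈ heights y Q ↔ (d : ℝ) < Q ∧ 0 < d ∧ Nat.gcd y d = 1 := by
  rw [heights, Finset.mem_filter, Finset.mem_range, Nat.lt_ceil]

lemma gcd_mul_of_dvd {y g d : ℕ} (hgy : g ∣ y) (hyd : Nat.gcd y d = 1) :
    Nat.gcd y (g * d) = g := by
  rw [Nat.Coprime.gcd_mul_right_cancel_right _ (Nat.coprime_comm.1 hyd)]
  exact Nat.gcd_eq_right hgy

lemma lcm_mul_of_dvd {y g d : ℕ} (hg : 0 < g) (hgy : g ∣ y) (hyd : Nat.gcd y d = 1) :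
    Nat.lcm y (g * d) = y * d := by
  rw [Nat.lcm, gcd_mul_of_dvd hgy hyd]
  obtain ⟨k, rfl⟩ := hgy
  rw [show g * k * (g * d) = g * (g * k * d) by ring, Nat.mul_div_cancel_left _ hg]

lemma hgt_mul_of_dvd {y g d : ℕ} (hy : 0 < y) (hg : 0 < g) (hgy : g ∣ y)
    (hyd : Nat.gcd y d = 1) : hgt y (g * d) = d := by
  rw [hgt, gcd_mul_of_dvd hgy hyd, lcm_mul_of_dvd hg hgy hyd, Nat.mul_div_cancel_left _ hg,
    Nat.mul_div_cancel_left _ hy, Nat.Coprime.coprime_dvd_left hgy hyd, if_neg]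
  simp

lemma sum_filter_hgt_eq {M : Type*} [AddCommMonoid M] {y : ℕ} (hy : 0 < y) (Q : ℝ) (T : ℕ → M)
    (hT : ∀ q, 0 < q → Nat.gcd (Nat.gcd y q) (q / Nat.gcd y q) ≠ 1 → T q = 0) :
    ∑ q ∈ (Finset.Icc 1 (y * ⌈Q⌉₊)).filter (fun q : ℕ => (hgt y q : ℝ) < Q), T q =
      ∑ d ∈ heights y Q, ∑ g ∈ y.divisors, T (g * d) := by
  rw [← Finset.sum_filter_of_ne (p := fun q => Nat.gcd (Nat.gcd y q) (q / Nat.gcd y q) = 1)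
    fun q hq h => by
      by_contra h1
      exact h (hT q (Finset.mem_Icc.1 (Finset.mem_filter.1 hq).1).1 h1),
    Finset.sum_sigma']
  symm
  refine Finset.sum_bij (fun p _ => p.2 * p.1) ?_ ?_ ?_ fun _ _ => rfl
  · rintro ⟨d, g⟩ h
    simp only [Finset.mem_sigma, mem_heights, Finset.mem_filter, Finset.mem_Icc] at h ⊢
    obtain ⟨⟨h1, h2, h3⟩, h4⟩ := h
    have hg := Nat.pos_of_mem_divisors h4
    have hgy := Nat.dvd_of_mem_divisors h4
    refine ⟨⟨⟨Nat.mul_pos hg h2, ?_⟩, ?_⟩, ?_⟩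
    · exact Nat.mul_le_mul (Nat.le_of_dvd hy hgy) (Nat.lt_ceil.2 h1).le
    · rwa [hgt_mul_of_dvd hy hg hgy h3]
    · rw [gcd_mul_of_dvd hgy h3, Nat.mul_div_cancel_left _ hg]
      exact Nat.Coprime.coprime_dvd_left hgy h3
  · rintro ⟨d, g⟩ h ⟨d', g'⟩ h' he
    simp only [Finset.mem_sigma, mem_heights] at h h' he
    have e1 := gcd_mul_of_dvd (Nat.dvd_of_mem_divisors h.2) h.1.2.2
    rw [he, gcd_mul_of_dvd (Nat.dvd_of_mem_divisors h'.2) h'.1.2.2] at e1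
    subst e1
    have e2 : d = d' := Nat.eq_of_mul_eq_mul_left (Nat.pos_of_mem_divisors h'.2) he
    rw [e2]
  · intro q hq
    simp only [Finset.mem_filter, Finset.mem_Icc] at hq
    obtain ⟨⟨⟨h1, h2⟩, h3⟩, h4⟩ := hq
    have hg0 : 0 < Nat.gcd y q := Nat.gcd_pos_of_pos_left _ hy
    have hcop := Nat.coprime_div_gcd_div_gcd hg0
    obtain ⟨d, hd⟩ : Nat.gcd y q ∣ q := Nat.gcd_dvd_right _ _
    obtain ⟨k, hk⟩ : Nat.gcd y q ∣ y := Nat.gcd_dvd_left _ _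
    have hgy : Nat.gcd y q ∣ y := Nat.gcd_dvd_left _ _
    set g := Nat.gcd y q with hgdef
    have e1 : q / g = d := by rw [hd, Nat.mul_div_cancel_left _ hg0]
    have e2 : y / g = k := by rw [hk, Nat.mul_div_cancel_left _ hg0]
    rw [e1, e2] at hcop
    rw [e1] at h4
    have hyd : Nat.gcd y d = 1 := by
      rw [hk]
      exact Nat.Coprime.mul_left h4 hcop
    have hd0 : 0 < d := Nat.pos_of_ne_zero (by rintro rfl; simp at hd; omega)
    rw [hd, hgt_mul_of_dvd hy hg0 hgy hyd] at h3
    exact ⟨⟨d, g⟩, by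
      simp only [Finset.mem_sigma, mem_heights, Nat.mem_divisors]
      exact ⟨⟨h3, hd0, hyd⟩, hgy, hy.ne'⟩, hd.symm⟩

lemma LoK_eq {χ : ℝ → ℝ} (hχ : Continuous χ)
    (hχ0 : ∀ x : ℝ, x ∉ Set.Icc (-(1/4) : ℝ) (1/4) → χ x = 0) {y : ℕ} (hy : 0 < y) (b : ℤ) (N : ℕ)
    (Q : ℝ) (x : ℤ) :
    LoK χ y b N Q x = ∑ d ∈ heights y Q, charSum y b d x *
        stepAvg N (y * d) (fun u => bumpKer χ (((y * d : ℕ) : ℝ) ^ 2) u) x -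
      if 1 < Q then stepAvg N y (fun u => halfBumpKer χ ((y : ℝ) ^ 2) u) x else 0 := by
  set T : ℕ → ℂ := fun q => ∑ a ∈ (Finset.Icc 1 q).filter (fun a : ℕ => Nat.gcd a q = 1),
    Ups y b a q * e2pi (x * a / q) *
      stepAvg N (Nat.lcm y q) (fun u => bumpKer χ ((Nat.lcm y q : ℝ) ^ 2) u) x with hTdef
  have hinner : ∀ q : ℕ, 0 < q →
      ∑ a ∈ (Finset.Icc 1 q).filter (fun a : ℕ => Nat.gcd a q = 1), Lker χ y b (N : ℝ) a q x =
      T q - if q = 1 then stepAvg N y (fun u => halfBumpKer χ ((y : ℝ) ^ 2) u) x else 0 := by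
    intro q hq
    by_cases h1 : q = 1
    · subst h1
      have hs : (Finset.Icc 1 1).filter (fun a : ℕ => Nat.gcd a 1 = 1) = {1} := by
        ext a; simp
      simp only [hTdef, hs, Finset.sum_singleton, Lker_one_eq hχ hχ0 hy, stepAvg,
        Nat.lcm_one_right, if_true, Nat.cast_one]
    · rw [if_neg h1, sub_zero]
      refine Finset.sum_congr rfl fun a ha => ?_
      simp only [Finset.mem_filter, Finset.mem_Icc] at ha
      have haq : a < q := by
        refine lt_of_le_of_ne ha.1.2 ?_
        rintro rfl
        exact h1 (by simpa using ha.2)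
      rw [Lker_eq hχ hχ0 hy b N ha.1.1 haq]
      rfl
  have hT : ∀ q, 0 < q → Nat.gcd (Nat.gcd y q) (q / Nat.gcd y q) ≠ 1 → T q = 0 := by
    intro q hq h
    refine Finset.sum_eq_zero fun a ha => ?_
    have hg0 : 0 < Nat.gcd y q := Nat.gcd_pos_of_pos_left _ hy
    have hd0 : 0 < q / Nat.gcd y q :=
      Nat.div_pos (Nat.le_of_dvd hq (Nat.gcd_dvd_right _ _)) hg0
    have e := Nat.mul_div_cancel' (Nat.gcd_dvd_right y q)
    have hz := Ups_eq_zero (y := y) (g := Nat.gcd y q) (d := q / Nat.gcd y q) hg0 hd0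
      (by rw [e]) h b (a := a)
      (by rw [e, Int.gcd_natCast_natCast]; exact (Finset.mem_filter.1 ha).2)
    rw [e] at hz
    rw [hz, zero_mul, zero_mul]
  rw [LoK, Finset.sum_congr rfl fun q hq =>
    hinner q (Finset.mem_Icc.1 (Finset.mem_filter.1 hq).1).1, Finset.sum_sub_distrib,
    sum_filter_hgt_eq hy Q T hT]
  congr 1
  · refine Finset.sum_congr rfl fun d hd => ?_
    obtain ⟨-, hd0, hyd⟩ := mem_heights.1 hd
    rw [charSum, Finset.sum_mul]
    refine Finset.sum_congr rfl fun g hg => ?_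
    rw [Finset.sum_mul]
    simp only [hTdef, lcm_mul_of_dvd (Nat.pos_of_mem_divisors hg) (Nat.dvd_of_mem_divisors hg) hyd]
  · rw [Finset.sum_ite_eq']
    have h1 : hgt y 1 = 1 := hgt_mul_of_dvd (g := 1) (d := 1) hy one_pos (one_dvd _) (by simp)
    congr 1
    rw [Finset.mem_filter, Finset.mem_Icc, h1, Nat.cast_one, eq_iff_iff]
    refine ⟨fun h => h.2, fun h => ⟨⟨le_rfl, Nat.mul_pos hy (Nat.ceil_pos.2 (by linarith))⟩, h⟩⟩

lemma tsum_enorm_le_of_norm_le_decayWeight {A C : ℝ} (hA : 1 ≤ A) (hC : 0 ≤ C) {k : ℤ → ℂ}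
    (hk : ∀ u : ℤ, ‖k u‖ ≤ C * decayWeight A u) :
    ∑' u : ℤ, ‖k u‖ₑ ≤ ENNReal.ofReal (C * 4) := by
  have h := tsum_decayWeight_le (m := 1) one_pos (by simpa using hA) 0
  simp only [Nat.cast_one, one_mul, zero_add, div_one] at h
  calc ∑' u : ℤ, ‖k u‖ₑ ≤ ∑' u : ℤ, ENNReal.ofReal C * ENNReal.ofReal (decayWeight A u) := by
        refine ENNReal.tsum_le_tsum fun u => ?_
        rw [← ofReal_norm, ← ENNReal.ofReal_mul hC]
        exact ENNReal.ofReal_le_ofReal (hk u)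
    _ ≤ ENNReal.ofReal C * ENNReal.ofReal 4 := by
        rw [ENNReal.tsum_mul_left]
        exact mul_le_mul_right h _
    _ = _ := (ENNReal.ofReal_mul hC).symm

lemma fourier_unitAddCircle (n : ℤ) (x : ℝ) :
    fourier n (x : AddCircle (1 : ℝ)) = e2pi (n * x) := by
  rw [fourier_coe_apply, e2pi]
  congr 1
  push_cast
  ring

/-- Fourier inversion for the periodised bump. -/
lemma hasSum_bumpKer {χ : ℝ → ℝ} (hχ : Continuous χ)
    (hχ0 : ∀ x : ℝ, x ∉ Set.Icc (-(1/4) : ℝ) (1/4) → χ x = 0) {A : ℝ} (hA : 1 ≤ A)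
    (hs : Summable fun u : ℤ => bumpKer χ A u) {η : ℝ} (hη : η ∈ Set.Ico (-(1 / 2) : ℝ) (1 / 2)) :
    HasSum (fun u : ℤ => bumpKer χ A u * e2pi (-(u * η))) (χ (A * η) : ℂ) := by
  set f : ℝ → ℂ := fun η => (χ (A * η) : ℂ) with hf
  have hhalf : (-(1 / 2) : ℝ) + 1 = 1 / 2 := by norm_num
  have hend : f (-(1 / 2)) = f (-(1 / 2) + 1) := by
    rw [hhalf]
    simp only [hf]
    rw [hχ0, hχ0] <;> rw [Set.mem_Icc] <;> intro h <;> linarith [h.1, h.2]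
  have : Fact ((0 : ℝ) < 1) := ⟨one_pos⟩
  set g : C(AddCircle (1 : ℝ), ℂ) := ⟨AddCircle.liftIco 1 (-(1 / 2)) f,
    AddCircle.liftIco_continuous hend (by fun_prop)⟩ with hg
  have hco : ∀ n : ℤ, fourierCoeff g n = bumpKer χ A (-n : ℤ) := by
    intro n
    rw [hg]
    change fourierCoeff (AddCircle.liftIco 1 (-(1 / 2)) f) n = _
    rw [fourierCoeff_liftIco_eq, fourierCoeffOn_eq_integral, bumpKer]
    rw [hhalf, show (1 : ℝ) / (1 / 2 - -(1 / 2)) = 1 by norm_num, one_smul]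
    refine intervalIntegral.integral_congr fun x _ => ?_
    simp only [hf, smul_eq_mul]
    rw [mul_comm]
    congr 1
    rw [fourier_coe_apply, e2pi]
    congr 1
    push_cast
    norm_num
    ring
  have hsum : Summable (fourierCoeff g) := by
    have h1 := (Equiv.neg ℤ).summable_iff.2 hs
    refine h1.congr fun n => ?_
    rw [hco]
    rfl
  have h2 := has_pointwise_sum_fourier_series_of_summable hsum (η : AddCircle (1 : ℝ))
  have h3 : g (η : AddCircle (1 : ℝ)) = (χ (A * η) : ℂ) := by
    change AddCircle.liftIco 1 (-(1 / 2)) f (η : AddCircle (1 : ℝ)) = _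
    rw [AddCircle.liftIco_coe_apply (by rwa [hhalf])]
  rw [h3] at h2
  rw [← (Equiv.neg ℤ).hasSum_iff]
  convert h2 using 2 with n
  rw [hco, fourier_unitAddCircle, smul_eq_mul]
  simp

lemma halfBumpKer_eq_tsum {χ : ℝ → ℝ} (hχ : Continuous χ)
    (hχ0 : ∀ x : ℝ, x ∉ Set.Icc (-(1/4) : ℝ) (1/4) → χ x = 0) {A : ℝ} (hA : 1 ≤ A)
    (hs : Summable fun u : ℤ => ‖bumpKer χ A u‖) (x : ℤ) :
    HasSum (fun u : ℤ => bumpKer χ A u * halfKer (x - u)) (halfBumpKer χ A x) := by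
  have h := intervalIntegral.hasSum_integral_of_dominated_convergence
    (μ := MeasureTheory.volume) (a := (0 : ℝ)) (b := 1 / 2)
    (F := fun (u : ℤ) (η : ℝ) => bumpKer χ A u * e2pi (((x - u : ℤ) : ℝ) * η))
    (f := fun η => (χ (A * η) : ℂ) * e2pi (x * η)) (fun u _ => ‖bumpKer χ A u‖)
    (fun u => (by fun_prop : Continuous fun η : ℝ =>
      bumpKer χ A u * e2pi (((x - u : ℤ) : ℝ) * η)).aestronglyMeasurable)
    (fun u => Filter.Eventually.of_forall fun η _ => by rw [norm_mul, norm_e2pi, mul_one])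
    (Filter.Eventually.of_forall fun η _ => hs) (by simp) ?_
  · have e : ∀ u : ℤ, bumpKer χ A u * halfKer (x - u) =
        ∫ η in (0 : ℝ)..(1 / 2), bumpKer χ A u * e2pi (((x - u : ℤ) : ℝ) * η) := fun u => by
      rw [intervalIntegral.integral_const_mul, halfKer]
    simp only [e]
    exact h
  · have hne : ∀ᵐ η : ℝ, η ≠ 1 / 2 := by
      simp [MeasureTheory.ae_iff, MeasureTheory.measure_singleton]
    filter_upwards [hne] with η hη hη'
    rw [Set.uIoc_of_le (by norm_num)] at hη'
    have h1 := (hasSum_bumpKer hχ hχ0 hA hs.of_norm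
      (η := η) ⟨by linarith [hη'.1], lt_of_le_of_ne hη'.2 hη⟩).mul_right (e2pi (x * η))
    have e : ∀ u : ℤ, bumpKer χ A u * e2pi (((x - u : ℤ) : ℝ) * η) =
        bumpKer χ A u * e2pi (-(u * η)) * e2pi (x * η) := fun u => by
      rw [mul_assoc, ← e2pi_add]
      congr 2
      push_cast
      ring
    simp only [e]
    exact h1

lemma sum_halfBumpKer_eq {χ : ℝ → ℝ} (hχ : Continuous χ)
    (hχ0 : ∀ x : ℝ, x ∉ Set.Icc (-(1/4) : ℝ) (1/4) → χ x = 0) {A : ℝ} (hA : 1 ≤ A)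
    (hs : Summable fun u : ℤ => ‖bumpKer χ A u‖) (F : Finset ℤ) (x : ℤ) :
    HasSum (fun u : ℤ => bumpKer χ A u * halfProj F (x - u))
      (∑ z ∈ F, halfBumpKer χ A ((x - z : ℤ) : ℝ)) := by
  have h := hasSum_sum fun z (_ : z ∈ F) => halfBumpKer_eq_tsum hχ hχ0 hA hs (x - z)
  convert h using 2 with u
  rw [halfProj, Finset.mul_sum]
  refine Finset.sum_congr rfl fun z _ => ?_
  congr 2
  ring

lemma enorm_stepAvg_le {N ℓ : ℕ} (hℓ : 0 < ℓ) (hN : ℓ ≤ N) {f : ℤ → ℂ} {a g : ℤ → ℝ≥0∞}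
    (x : ℤ) (h : ∀ n : ℕ, ‖f (x - ℓ * n)‖ₑ ≤ ∑' u, a u * g (x - ℓ * n - u)) :
    ‖stepAvg N ℓ f x‖ₑ ≤ 2 * ∑' u, a u * avgMax ℓ g (x - u) := by
  have hℓ0 : (0 : ℝ) < ℓ := by exact_mod_cast hℓ
  have h1 : 1 ≤ (N : ℝ) / ℓ := by rw [one_le_div hℓ0]; exact_mod_cast hN
  set M := ⌈(N : ℝ) / ℓ⌉₊ with hM
  have hM0 : 0 < M := Nat.ceil_pos.2 (by linarith)
  have hM1 : (M : ℝ) < (N : ℝ) / ℓ + 1 := Nat.ceil_lt_add_one (by linarith)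
  have hc : ENNReal.ofReal (1 / ((N : ℝ) / ℓ)) * M ≤ 2 := by
    rw [← ENNReal.ofReal_natCast, ← ENNReal.ofReal_mul (by positivity),
      ← ENNReal.ofReal_ofNat]
    refine ENNReal.ofReal_le_ofReal ?_
    rw [one_div_mul_eq_div, div_le_iff₀ (by linarith)]
    linarith
  have hav : ∀ u : ℤ, ∑ n ∈ Finset.range M, g (x - u - ℓ * n) ≤ M * avgMax ℓ g (x - u) := by
    intro u
    obtain ⟨m, hm⟩ := Nat.exists_eq_add_of_lt hM0
    rw [zero_add] at hm
    rw [hm, mul_comm]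
    refine (ENNReal.div_le_iff_le_mul (Or.inl (by simp)) (Or.inl (by simp))).1 ?_
    exact le_iSup (fun n : ℕ => (∑ i ∈ Finset.range (n + 1), g (x - u - ℓ * i)) /
      ((n + 1 : ℕ) : ℝ≥0∞)) m
  calc ‖stepAvg N ℓ f x‖ₑ
      ≤ ENNReal.ofReal (1 / ((N : ℝ) / ℓ)) * ∑ n ∈ Finset.range M, ‖f (x - ℓ * n)‖ₑ := by
        rw [stepAvg, enorm_mul, ← ofReal_norm, Complex.norm_real,
          Real.norm_of_nonneg (by positivity)]
        exact mul_le_mul_right (enorm_sum_le _ _) _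
    _ ≤ ENNReal.ofReal (1 / ((N : ℝ) / ℓ)) *
          ∑ n ∈ Finset.range M, ∑' u, a u * g (x - ℓ * n - u) :=
        mul_le_mul_right (Finset.sum_le_sum fun n _ => h n) _
    _ = ENNReal.ofReal (1 / ((N : ℝ) / ℓ)) *
          ∑' u, a u * ∑ n ∈ Finset.range M, g (x - u - ℓ * n) := by
        rw [← Summable.tsum_finsetSum fun _ _ => ENNReal.summable]
        congr 1
        refine tsum_congr fun u => ?_
        rw [Finset.mul_sum]
        refine Finset.sum_congr rfl fun n _ => ?_
        congr 2
        ring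
    _ ≤ ENNReal.ofReal (1 / ((N : ℝ) / ℓ)) * ∑' u, M * (a u * avgMax ℓ g (x - u)) := by
        refine mul_le_mul_right (ENNReal.tsum_le_tsum fun u => ?_) _
        rw [mul_left_comm]
        exact mul_le_mul_right (hav u) _
    _ ≤ _ := by
        rw [ENNReal.tsum_mul_left, ← mul_assoc]
        exact mul_le_mul_left hc _

lemma sum_mul_stepAvg (F : Finset ℤ) (N ℓ : ℕ) (c k : ℤ → ℂ)
    (hc : ∀ x m : ℤ, c (x + ℓ * m) = c x) (x : ℤ) :
    ∑ z ∈ F, c (x - z) * stepAvg N ℓ k (x - z) =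
      stepAvg N ℓ (fun w => ∑ z ∈ F, c (w - z) * k (w - z)) x := by
  simp only [stepAvg]
  rw [Finset.sum_comm, Finset.mul_sum]
  refine Finset.sum_congr rfl fun z _ => ?_
  rw [mul_left_comm, Finset.mul_sum]
  congr 1
  refine Finset.sum_congr rfl fun n _ => ?_
  have e : x - (ℓ : ℤ) * n - z = x - z - ℓ * n := by ring
  rw [e]
  congr 1
  rw [← hc (x - z) (-n)]
  congr 1
  ring

lemma enorm_sum_le_tsum_indicator (F : Finset ℤ) (k : ℤ → ℂ) (w : ℤ) :
    ‖∑ z ∈ F, k (w - z)‖ₑ ≤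
      ∑' u, ‖k u‖ₑ * (F : Set ℤ).indicator (fun _ => (1 : ℝ≥0∞)) (w - u) := by
  refine (enorm_sum_le _ _).trans ?_
  rw [← (Equiv.subLeft w).tsum_eq]
  simp only [Equiv.subLeft_apply, sub_sub_cancel]
  refine le_trans (le_of_eq ?_) (ENNReal.sum_le_tsum F)
  refine Finset.sum_congr rfl fun z hz => ?_
  rw [Set.indicator_of_mem (by exact_mod_cast hz), mul_one]

/-- A pointwise bound for the Low convolution that does not depend on `N`. -/
lemma enorm_LoConv_le {χ : ℝ → ℝ} (hχ : Continuous χ)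
    (hχ0 : ∀ x : ℝ, x ∉ Set.Icc (-(1/4) : ℝ) (1/4) → χ x = 0)
    (hs : ∀ A : ℝ, 1 ≤ A → Summable fun u : ℤ => ‖bumpKer χ A u‖) {y : ℕ} (hy : 0 < y) (b : ℤ)
    {N : ℕ} (hyN : y ≤ N) {Q : ℝ} (hN : ∀ d ∈ heights y Q, y * d ≤ N) (F : Finset ℤ) (x : ℤ) :
    ‖LoConv χ y b N Q F x‖ₑ ≤
      2 * (∑ d ∈ heights y Q, ∑' u : ℤ,
        ‖charSum y b d u * bumpKer χ (((y * d : ℕ) : ℝ) ^ 2) u‖ₑ *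
          avgMax (y * d) ((F : Set ℤ).indicator fun _ => 1) (x - u)) +
      2 * ∑' u : ℤ, ‖bumpKer χ ((y : ℝ) ^ 2) u‖ₑ *
        avgMax y (fun w => ‖halfProj F w‖ₑ) (x - u) := by
  have hA : (1 : ℝ) ≤ (y : ℝ) ^ 2 := one_le_pow₀ (by exact_mod_cast hy)
  have e : LoConv χ y b N Q F x =
      ∑ d ∈ heights y Q, stepAvg N (y * d) (fun w => ∑ z ∈ F, charSum y b d (w - z) *
        bumpKer χ (((y * d : ℕ) : ℝ) ^ 2) ((w - z : ℤ) : ℝ)) x -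
      if 1 < Q then stepAvg N y (fun w => ∑ z ∈ F,
        halfBumpKer χ ((y : ℝ) ^ 2) ((w - z : ℤ) : ℝ)) x else 0 := by
    simp only [LoConv, LoK_eq hχ hχ0 hy, Finset.sum_sub_distrib]
    congr 1
    · rw [Finset.sum_comm]
      refine Finset.sum_congr rfl fun d hd => ?_
      exact sum_mul_stepAvg F N (y * d) (charSum y b d)
        (fun u => bumpKer χ (((y * d : ℕ) : ℝ) ^ 2) u)
        (fun x m => charSum_add_mul (mem_heights.1 hd).2.1 b x m) x
    · split_ifs
      · have h := sum_mul_stepAvg F N y (fun _ => 1) (fun u => halfBumpKer χ ((y : ℝ) ^ 2) u)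
          (fun _ _ => rfl) x
        simpa only [one_mul] using h
      · simp
  rw [e]
  refine (enorm_sub_le).trans (add_le_add ?_ ?_)
  · refine (enorm_sum_le _ _).trans ?_
    rw [Finset.mul_sum]
    refine Finset.sum_le_sum fun d hd => ?_
    exact enorm_stepAvg_le (Nat.mul_pos hy (mem_heights.1 hd).2.1) (hN d hd) x fun n =>
      enorm_sum_le_tsum_indicator F
        (fun u => charSum y b d u * bumpKer χ (((y * d : ℕ) : ℝ) ^ 2) u) _
  · split_ifs
    · refine enorm_stepAvg_le hy hyN x fun n => ?_
      rw [← (sum_halfBumpKer_eq hχ hχ0 hA (hs _ hA) F _).tsum_eq]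
      refine (enorm_tsum_le_tsum_enorm).trans (le_of_eq ?_)
      exact tsum_congr fun u => enorm_mul _ _
    · simp

/-- Jensen's inequality for weighted series in `ℝ≥0∞`. -/
lemma tsum_mul_rpow_le {ι : Type*} (a g : ι → ℝ≥0∞) {r : ℝ} (hr : 1 < r) :
    (∑' i, a i * g i) ^ r ≤ (∑' i, a i) ^ (r - 1) * ∑' i, a i * g i ^ r := by
  have hr0 : 0 < r := by linarith
  have h : ∑' i, a i * g i ≤
      (∑' i, a i) ^ (1 - r⁻¹) * (∑' i, a i * g i ^ r) ^ r⁻¹ := by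
    rw [ENNReal.tsum_eq_iSup_sum]
    refine iSup_le fun s => (ENNReal.inner_le_weight_mul_Lp_of_nonneg s hr.le a g).trans ?_
    have : 0 ≤ 1 - r⁻¹ := by
      rw [sub_nonneg]
      exact inv_le_one_of_one_le₀ hr.le
    gcongr
    · exact ENNReal.sum_le_tsum s
    · exact ENNReal.sum_le_tsum s
  calc (∑' i, a i * g i) ^ r
      ≤ ((∑' i, a i) ^ (1 - r⁻¹) * (∑' i, a i * g i ^ r) ^ r⁻¹) ^ r :=
        ENNReal.rpow_le_rpow h hr0.le
    _ = _ := by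
        rw [ENNReal.mul_rpow_of_nonneg _ _ hr0.le, ← ENNReal.rpow_mul, ← ENNReal.rpow_mul,
          inv_mul_cancel₀ hr0.ne', ENNReal.rpow_one, sub_mul, inv_mul_cancel₀ hr0.ne', one_mul]

lemma tsum_tsum_mul_rpow_le {ι : Type*} (a : ι → ℝ≥0∞) (G : ι → ℤ → ℝ≥0∞) {r : ℝ} (hr : 1 < r)
    {B : ℝ≥0∞} (hB : ∀ i, ∑' x, G i x ^ r ≤ B) :
    ∑' x, (∑' i, a i * G i x) ^ r ≤ (∑' i, a i) ^ r * B := by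
  calc ∑' x, (∑' i, a i * G i x) ^ r
      ≤ ∑' x, (∑' i, a i) ^ (r - 1) * ∑' i, a i * G i x ^ r :=
        ENNReal.tsum_le_tsum fun x => tsum_mul_rpow_le a (fun i => G i x) hr
    _ = (∑' i, a i) ^ (r - 1) * ∑' i, a i * ∑' x, G i x ^ r := by
        rw [ENNReal.tsum_mul_left, ENNReal.tsum_comm]
        simp only [ENNReal.tsum_mul_left]
    _ ≤ (∑' i, a i) ^ (r - 1) * ∑' i, a i * B :=
        mul_le_mul_right (ENNReal.tsum_le_tsum fun i => mul_le_mul_right (hB i) _) _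
    _ = _ := by
        rw [ENNReal.tsum_mul_right, ← mul_assoc]
        congr 1
        nth_rewrite 2 [← ENNReal.rpow_one (∑' i, a i)]
        rw [← ENNReal.rpow_add_of_nonneg _ _ (by linarith) zero_le_one, sub_add_cancel]

lemma tsum_avgMax_sub_rpow_le {l : ℕ} (hl : 0 < l) {r : ℝ} (hr : 1 < r) (g : ℤ → ℝ≥0∞) (u : ℤ) :
    ∑' x, avgMax l g (x - u) ^ r ≤ ENNReal.ofReal (2 ^ r * r / (r - 1)) * ∑' x, g x ^ r := by
  exact ((Equiv.subRight u).tsum_eq fun x => avgMax l g x ^ r).trans_le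
    (tsum_avgMax_rpow_le hl hr g)

lemma tsum_indicator_one_rpow (F : Finset ℤ) {r : ℝ} (hr : 0 < r) :
    ∑' x, (F : Set ℤ).indicator (fun _ => (1 : ℝ≥0∞)) x ^ r = F.card := by
  have e : ∀ x, (F : Set ℤ).indicator (fun _ => (1 : ℝ≥0∞)) x ^ r =
      (F : Set ℤ).indicator (fun _ => (1 : ℝ≥0∞)) x := fun x => by
    by_cases h : x ∈ (F : Set ℤ)
    · simp [Set.indicator_of_mem h]
    · simp [Set.indicator_of_notMem h, hr]
  simp only [e]
  rw [← tsum_subtype]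
  simp

lemma card_divisors_div_totient_eq {d : ℕ} (hd : Squarefree d) :
    (d.divisors.card / Nat.totient d : ℝ) = ∏ p ∈ d.primeFactors, 2 / ((p : ℝ) - 1) := by
  have hd0 : d ≠ 0 := hd.ne_zero
  have h1 : d.divisors.card = ∏ p ∈ d.primeFactors, 2 := by
    rw [Nat.card_divisors hd0]
    refine Finset.prod_congr rfl fun p hp => ?_
    rw [Nat.factorization_eq_one_of_squarefree hd (Nat.prime_of_mem_primeFactors hp)
      (Nat.dvd_of_mem_primeFactors hp)]
  have h2 : Nat.totient d = ∏ p ∈ d.primeFactors, (p - 1) := by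
    have h := Nat.totient_mul_prod_primeFactors d
    rw [Nat.prod_primeFactors_of_squarefree hd, mul_comm] at h
    exact Nat.eq_of_mul_eq_mul_left (Nat.pos_of_ne_zero hd0) h
  rw [h1, h2, Finset.prod_div_distrib]
  push_cast
  congr 1
  refine Finset.prod_congr rfl fun p hp => ?_
  rw [Nat.cast_sub (Nat.prime_of_mem_primeFactors hp).one_le, Nat.cast_one]

lemma exists_sum_card_divisors_div_totient_le {ε : ℝ} (hε : 0 < ε) :
    ∃ C : ℝ, 0 < C ∧ ∀ Q : ℝ, 0 < Q → ∀ s : Finset ℕ, (∀ d ∈ s, (d : ℝ) < Q) →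
      ∑ d ∈ s, (if Squarefree d then 4 * (d.divisors.card / Nat.totient d : ℝ) else 0) ≤
        C * Q ^ ε := by
  set f : ℕ → ℝ := fun n => 4 * (1 / (n : ℝ) ^ (1 + ε)) with hf
  have hf0 : ∀ n, 0 ≤ f n := fun n => by positivity
  have hfs : Summable f :=
    (Real.summable_one_div_nat_rpow.2 (by linarith : (1 : ℝ) < 1 + ε)).mul_left 4
  refine ⟨4 * Real.exp (∑' n, f n), by positivity, fun Q hQ s hs => ?_⟩
  have hterm : ∀ d ∈ s.filter Squarefree, (d.divisors.card / Nat.totient d : ℝ) ≤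
      Q ^ ε * ∏ p ∈ d.primeFactors, f p := by
    intro d hd
    rw [Finset.mem_filter] at hd
    have hd0 : (0 : ℝ) < d := by exact_mod_cast Nat.pos_of_ne_zero hd.2.ne_zero
    have h1 : (d : ℝ) ^ ε = ∏ p ∈ d.primeFactors, (p : ℝ) ^ ε := by
      nth_rewrite 1 [← Nat.prod_primeFactors_of_squarefree hd.2]
      rw [Nat.cast_prod, Real.finsetProd_rpow _ _ fun p _ => Nat.cast_nonneg p]
    have h2 : (d : ℝ) ^ ε ≤ Q ^ ε := Real.rpow_le_rpow hd0.le (hs d hd.1).le hε.le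
    calc (d.divisors.card / Nat.totient d : ℝ)
        ≤ (d : ℝ) ^ ε * ∏ p ∈ d.primeFactors, f p := by
          rw [card_divisors_div_totient_eq hd.2, h1, ← Finset.prod_mul_distrib]
          refine Finset.prod_le_prod (fun p hp => ?_) fun p hp => ?_
          · have : (1 : ℝ) ≤ p := by exact_mod_cast (Nat.prime_of_mem_primeFactors hp).one_le
            exact div_nonneg zero_le_two (by linarith)
          · have hp2 : (2 : ℝ) ≤ p := by exact_mod_cast (Nat.prime_of_mem_primeFactors hp).two_le
            have hp0 : (0 : ℝ) < p := by linarith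
            have e : (p : ℝ) ^ ε * f p = 4 / p := by
              simp only [hf]
              rw [Real.rpow_add hp0, Real.rpow_one]
              have := (Real.rpow_pos_of_pos hp0 ε).ne'
              field_simp
            rw [e, div_le_div_iff₀ (by linarith) hp0]
            linarith
      _ ≤ _ := mul_le_mul_of_nonneg_right h2 (Finset.prod_nonneg fun p _ => hf0 p)
  have hsum : ∑ d ∈ s.filter Squarefree, ∏ p ∈ d.primeFactors, f p ≤ Real.exp (∑' n, f n) := by
    have hinj : Set.InjOn Nat.primeFactors (s.filter Squarefree : Set ℕ) := fun a ha b hb h => by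
      have ha' := (Finset.mem_filter.1 (Finset.mem_coe.1 ha)).2
      have hb' := (Finset.mem_filter.1 (Finset.mem_coe.1 hb)).2
      rw [← Nat.prod_primeFactors_of_squarefree ha', h, Nat.prod_primeFactors_of_squarefree hb']
    calc ∑ d ∈ s.filter Squarefree, ∏ p ∈ d.primeFactors, f p
        = ∑ t ∈ (s.filter Squarefree).image Nat.primeFactors, ∏ p ∈ t, f p :=
          (Finset.sum_image (f := fun t => ∏ p ∈ t, f p) hinj).symm
      _ ≤ ∑ t ∈ ((s.filter Squarefree).biUnion Nat.primeFactors).powerset, ∏ p ∈ t, f p := by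
          refine Finset.sum_le_sum_of_subset_of_nonneg (fun t ht => ?_)
            fun t _ _ => Finset.prod_nonneg fun p _ => hf0 p
          obtain ⟨d, hd, rfl⟩ := Finset.mem_image.1 ht
          exact Finset.mem_powerset.2 (Finset.subset_biUnion_of_mem Nat.primeFactors hd)
      _ = ∏ p ∈ (s.filter Squarefree).biUnion Nat.primeFactors, (1 + f p) :=
          (Finset.prod_one_add _).symm
      _ ≤ ∏ p ∈ (s.filter Squarefree).biUnion Nat.primeFactors, Real.exp (f p) :=
          Finset.prod_le_prod (fun p _ => by linarith [hf0 p]) fun p _ => by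
            linarith [Real.add_one_le_exp (f p)]
      _ ≤ _ := by
          rw [← Real.exp_sum]
          exact Real.exp_le_exp.2 (hfs.sum_le_tsum _ fun p _ => hf0 p)
  calc ∑ d ∈ s, (if Squarefree d then 4 * (d.divisors.card / Nat.totient d : ℝ) else 0)
      = ∑ d ∈ s.filter Squarefree, 4 * (d.divisors.card / Nat.totient d : ℝ) :=
        (Finset.sum_filter _ _).symm
    _ ≤ ∑ d ∈ s.filter Squarefree, 4 * (Q ^ ε * ∏ p ∈ d.primeFactors, f p) :=
        Finset.sum_le_sum fun d hd => mul_le_mul_of_nonneg_left (hterm d hd) (by norm_num)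
    _ = 4 * Q ^ ε * ∑ d ∈ s.filter Squarefree, ∏ p ∈ d.primeFactors, f p := by
        rw [Finset.mul_sum]
        exact Finset.sum_congr rfl fun d _ => by ring
    _ ≤ 4 * Q ^ ε * Real.exp (∑' n, f n) :=
        mul_le_mul_of_nonneg_left hsum (by positivity)
    _ = _ := by ring

lemma tsum_two_mul_add_rpow_le {S T : ℤ → ℝ≥0∞} {r : ℝ} (hr : 1 < r) {X : ℝ≥0∞}
    (hS : ∑' x, S x ^ r ≤ X) (hT : ∑' x, T x ^ r ≤ X) :
    ∑' x, (2 * S x + 2 * T x) ^ r ≤ 4 ^ r * X := by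
  have hr0 : 0 < r := by linarith
  have h : ∀ x, (2 * S x + 2 * T x) ^ r ≤ 2 ^ r * 2 ^ (r - 1) * (S x ^ r + T x ^ r) := fun x => by
    rw [← mul_add, ENNReal.mul_rpow_of_nonneg _ _ hr0.le, mul_assoc]
    exact mul_le_mul_right (ENNReal.rpow_add_le_mul_rpow_add_rpow _ _ hr.le) _
  refine (ENNReal.tsum_le_tsum h).trans ?_
  rw [ENNReal.tsum_mul_left, ENNReal.tsum_add]
  refine (mul_le_mul_right (add_le_add hS hT) _).trans (le_of_eq ?_)
  have e : (4 : ℝ≥0∞) ^ r = 2 ^ r * (2 ^ (r - 1) * 2) := by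
    have h1 : (2 : ℝ≥0∞) ^ r = 2 ^ (r - 1) * 2 := by
      nth_rewrite 3 [← ENNReal.rpow_one 2]
      rw [← ENNReal.rpow_add _ _ two_ne_zero (by simp), sub_add_cancel]
    rw [← h1, ← ENNReal.mul_rpow_of_nonneg _ _ hr0.le]
    norm_num
  rw [e, ← two_mul]
  ring

lemma mul_le_of_lt_log {y N d : ℕ} (hN : 4 * y ^ 2 < N) (hd : (d : ℝ) < Real.log N) :
    y * d ≤ N := by
  have hN0 : (0 : ℝ) ≤ N := Nat.cast_nonneg N
  have h1 : Real.log N ≤ 2 * √N := by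
    have h := Real.log_le_rpow_div hN0 (ε := 1 / 2) (by norm_num)
    rw [← Real.sqrt_eq_rpow] at h
    linarith
  have h2 : 2 * (y : ℝ) ≤ √N := by
    refine Real.le_sqrt_of_sq_le ?_
    have : (4 * y ^ 2 : ℝ) < N := by exact_mod_cast hN
    linarith
  have h3 : (y : ℝ) * d ≤ N := by
    calc (y : ℝ) * d ≤ y * (2 * √N) := by gcongr; linarith
      _ = 2 * y * √N := by ring
      _ ≤ √N * √N := by gcongr
      _ = N := Real.mul_self_sqrt hN0
  exact_mod_cast h3

lemma tsum_sum_charSum_avgMax_rpow_le {χ : ℝ → ℝ} {C C₁ ε : ℝ} (hC : 0 ≤ C)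
    (hk : ∀ A u : ℝ, 1 ≤ A → ‖bumpKer χ A u‖ ≤ C * decayWeight A u) {y : ℕ} (hy : 0 < y) {b : ℤ}
    (hb : Int.gcd b y = 1) {Q : ℝ}
    (hsum : ∑ d ∈ heights y Q,
      (if Squarefree d then 4 * (d.divisors.card / Nat.totient d : ℝ) else 0) ≤ C₁ * Q ^ ε)
    {r : ℝ} (hr : 1 < r) (F : Finset ℤ) :
    ∑' x, (∑ d ∈ heights y Q, ∑' u : ℤ,
        ‖charSum y b d u * bumpKer χ (((y * d : ℕ) : ℝ) ^ 2) u‖ₑ *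
          avgMax (y * d) ((F : Set ℤ).indicator fun _ => 1) (x - u)) ^ r ≤
      ENNReal.ofReal (C * (C₁ * Q ^ ε)) ^ r *
        (ENNReal.ofReal (2 ^ r * r / (r - 1)) * F.card) := by
  set a : ℕ → ℤ → ℝ≥0∞ := fun d u =>
    ‖charSum y b d u * bumpKer χ (((y * d : ℕ) : ℝ) ^ 2) u‖ₑ with ha
  have hd0 : ∀ d ∈ heights y Q, 0 < d := fun d hd => (mem_heights.1 hd).2.1
  have e : ∀ x, ∑ d ∈ heights y Q, ∑' u : ℤ,
      a d u * avgMax (y * d) ((F : Set ℤ).indicator fun _ => 1) (x - u) =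
      ∑' i : heights y Q × ℤ, a i.1 i.2 *
        avgMax (y * i.1) ((F : Set ℤ).indicator fun _ => 1) (x - i.2) := fun x => by
    rw [ENNReal.tsum_prod', tsum_fintype, Finset.univ_eq_attach]
    exact (Finset.sum_attach (heights y Q) fun d => ∑' u : ℤ,
      a d u * avgMax (y * d) ((F : Set ℤ).indicator fun _ => 1) (x - u)).symm
  refine (le_of_eq (tsum_congr fun x => congrArg (fun t => t ^ r) (e x))).trans ?_
  refine (tsum_tsum_mul_rpow_le (fun i : heights y Q × ℤ => a i.1 i.2)
    (fun i x => avgMax (y * i.1) ((F : Set ℤ).indicator fun _ => 1) (x - i.2)) hr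
    (B := ENNReal.ofReal (2 ^ r * r / (r - 1)) * F.card) fun i => ?_).trans ?_
  · rw [← tsum_indicator_one_rpow F (by linarith : 0 < r)]
    exact tsum_avgMax_sub_rpow_le (Nat.mul_pos hy (hd0 _ i.1.2)) hr _ _
  refine mul_le_mul_left (ENNReal.rpow_le_rpow ?_ (by linarith)) _
  rw [ENNReal.tsum_prod', tsum_fintype, Finset.univ_eq_attach,
    Finset.sum_attach (heights y Q) fun d => ∑' u : ℤ, a d u]
  calc ∑ d ∈ heights y Q, ∑' u : ℤ, a d u
      ≤ ∑ d ∈ heights y Q, ENNReal.ofReal C * ENNReal.ofReal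
          (if Squarefree d then 4 * (d.divisors.card / Nat.totient d : ℝ) else 0) := by
        refine Finset.sum_le_sum fun d hd => ?_
        have hyd := Nat.mul_pos hy (hd0 d hd)
        refine le_trans ?_ (mul_le_mul_right
          (tsum_charSum_mul_decayWeight_le hy (hd0 d hd) (mem_heights.1 hd).2.2 hb) _)
        rw [← ENNReal.tsum_mul_left]
        refine ENNReal.tsum_le_tsum fun u => ?_
        simp only [ha]
        rw [← ENNReal.ofReal_mul hC, ← ofReal_norm, norm_mul, mul_left_comm]
        refine ENNReal.ofReal_le_ofReal (mul_le_mul_of_nonneg_left (hk _ _ ?_) (norm_nonneg _))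
        exact one_le_pow₀ (by exact_mod_cast hyd)
    _ ≤ _ := by
        rw [← Finset.mul_sum, ← ENNReal.ofReal_sum_of_nonneg fun d _ => by
          split_ifs <;> positivity, ← ENNReal.ofReal_mul hC]
        exact ENNReal.ofReal_le_ofReal (mul_le_mul_of_nonneg_left hsum hC)

lemma tsum_bumpKer_avgMax_halfProj_rpow_le {χ : ℝ → ℝ} {C : ℝ} (hC : 0 ≤ C)
    (hk : ∀ A u : ℝ, 1 ≤ A → ‖bumpKer χ A u‖ ≤ C * decayWeight A u) {y : ℕ} (hy : 0 < y)
    {r : ℝ} (hr : 1 < r) (hr2 : r < 2) (F : Finset ℤ) :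
    ∑' x, (∑' u : ℤ, ‖bumpKer χ ((y : ℝ) ^ 2) u‖ₑ *
        avgMax y (fun w => ‖halfProj F w‖ₑ) (x - u)) ^ r ≤
      ENNReal.ofReal (C * 4) ^ r * (ENNReal.ofReal (2 ^ r * r / (r - 1)) *
        (ENNReal.ofReal (5 * r / (r - 1) + 1) * F.card)) := by
  have hA : (1 : ℝ) ≤ (y : ℝ) ^ 2 := one_le_pow₀ (by exact_mod_cast hy)
  refine (tsum_tsum_mul_rpow_le (fun u : ℤ => ‖bumpKer χ ((y : ℝ) ^ 2) u‖ₑ)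
    (fun u x => avgMax y (fun w => ‖halfProj F w‖ₑ) (x - u)) hr fun u =>
      (tsum_avgMax_sub_rpow_le hy hr _ u).trans
        (mul_le_mul_right (tsum_enorm_halfProj_rpow_le hr hr2 F) _)).trans ?_
  exact mul_le_mul_left (ENNReal.rpow_le_rpow
    (tsum_enorm_le_of_norm_le_decayWeight hA hC fun u => hk _ u hA) (by linarith)) _

lemma summable_norm_bumpKer {χ : ℝ → ℝ} {C : ℝ} (hC : 0 ≤ C)
    (hk : ∀ A u : ℝ, 1 ≤ A → ‖bumpKer χ A u‖ ≤ C * decayWeight A u) {A : ℝ} (hA : 1 ≤ A) :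
    Summable fun u : ℤ => ‖bumpKer χ A u‖ := by
  have h : ∑' u : ℤ, ‖bumpKer χ A u‖ₑ ≠ ∞ :=
    ((tsum_enorm_le_of_norm_le_decayWeight hA hC fun u => hk _ u hA).trans_lt
      ENNReal.ofReal_lt_top).ne
  simpa using ENNReal.summable_toReal h

theorem low_term_maximal (χ : ℝ → ℝ) (hχs : ContDiff ℝ (⊤ : ℕ∞) χ)
    (hχr : ∀ x : ℝ, χ x ∈ Set.Icc (0 : ℝ) 1)
    (hχ1 : ∀ x ∈ Set.Icc (-(1/16) : ℝ) (1/16), χ x = 1)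
    (hχ0 : ∀ x : ℝ, x ∉ Set.Icc (-(1/4) : ℝ) (1/4) → χ x = 0) :
    ∀ ε : ℝ, 0 < ε → ∀ r : ℝ, 1 < r → r < 2 →
      ∃ C C' : ℝ, 0 < C ∧ 0 < C' ∧
        ∀ y : ℕ, 1 ≤ y →
          ∃ N0 : ℕ,
            ∀ b : ℤ, Int.gcd b y = 1 →
              ∀ Q : ℝ, 1 ≤ Q →
                ∀ F : Finset ℤ,
                  (∑' x : ℤ,
                      (⨆ (n : ℕ)
                          (_ : N0 < 2 ^ n ∧
                            Q < Real.log ((2 : ℝ) ^ n) ^ (C' * (r / (r - 1)))),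
                        (‖LoConv χ y b (2 ^ n) Q F x‖₊ : ℝ≥0∞)) ^ r) ^ (1 / r) ≤
                    ENNReal.ofReal (C * Q ^ ε * (F.card : ℝ) ^ (1 / r)) := by
  intro ε hε r hr hr2
  have hr0 : 0 < r := by linarith
  have hr1 : 0 < r - 1 := by linarith
  obtain ⟨C₀, hC₀, hk⟩ := exists_norm_bumpKer_le hχs hχr hχ0
  obtain ⟨C₁, hC₁, hsum⟩ := exists_sum_card_divisors_div_totient_le hε
  set K : ℝ := 2 ^ r * r / (r - 1) with hK
  set H : ℝ := 5 * r / (r - 1) + 1 with hH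
  have hK0 : 0 < K := by positivity
  have hH0 : 0 < H := by positivity
  have hH1 : 1 ≤ H := le_add_of_nonneg_left (by positivity)
  refine ⟨4 * (C₀ * (C₁ + 4)) * (K * H) ^ (1 / r), (r - 1) / r, by positivity, by positivity,
    fun y hy => ⟨4 * y ^ 2, fun b hb Q hQ F => ?_⟩⟩
  have hQε : 1 ≤ Q ^ ε := Real.one_le_rpow hQ hε.le
  set W : ℝ := C₀ * (C₁ + 4) * Q ^ ε with hW
  have hW0 : 0 < W := by positivity
  set S : ℤ → ℝ≥0∞ := fun x => ∑ d ∈ heights y Q, ∑' u : ℤ,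
    ‖charSum y b d u * bumpKer χ (((y * d : ℕ) : ℝ) ^ 2) u‖ₑ *
      avgMax (y * d) ((F : Set ℤ).indicator fun _ => 1) (x - u) with hS
  set T : ℤ → ℝ≥0∞ := fun x => ∑' u : ℤ, ‖bumpKer χ ((y : ℝ) ^ 2) u‖ₑ *
    avgMax y (fun w => ‖halfProj F w‖ₑ) (x - u) with hT
  set X : ℝ≥0∞ := ENNReal.ofReal W ^ r * (ENNReal.ofReal K * (ENNReal.ofReal H * F.card)) with hX
  have hSX : ∑' x, S x ^ r ≤ X := by
    refine (tsum_sum_charSum_avgMax_rpow_le hC₀.le hk hy hb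
      (hsum Q (by linarith) _ fun d hd => (mem_heights.1 hd).1) hr F).trans ?_
    refine mul_le_mul' (ENNReal.rpow_le_rpow (ENNReal.ofReal_le_ofReal ?_) hr0.le)
      (mul_le_mul_right (le_mul_of_one_le_left (zero_le) (ENNReal.one_le_ofReal.2 hH1)) _)
    rw [hW, mul_assoc]
    gcongr
    linarith
  have hTX : ∑' x, T x ^ r ≤ X := by
    refine (tsum_bumpKer_avgMax_halfProj_rpow_le hC₀.le hk hy hr hr2 F).trans ?_
    refine mul_le_mul_left (ENNReal.rpow_le_rpow (ENNReal.ofReal_le_ofReal ?_) hr0.le) _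
    rw [hW, mul_assoc]
    gcongr
    nlinarith
  have hpt : ∀ x, (⨆ (n : ℕ) (_ : 4 * y ^ 2 < 2 ^ n ∧
      Q < Real.log ((2 : ℝ) ^ n) ^ ((r - 1) / r * (r / (r - 1)))),
        (‖LoConv χ y b (2 ^ n) Q F x‖₊ : ℝ≥0∞)) ≤ 2 * S x + 2 * T x := by
    intro x
    refine iSup₂_le fun n hn => ?_
    obtain ⟨hn1, hn2⟩ := hn
    rw [div_mul_div_cancel₀ hr0.ne', div_self hr1.ne', Real.rpow_one] at hn2
    refine enorm_LoConv_le hχs.continuous hχ0 (fun A hA => summable_norm_bumpKer hC₀.le hk hA)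
      hy b ?_ (fun d hd => mul_le_of_lt_log hn1 ?_) F x
    · nlinarith
    · push_cast
      exact (mem_heights.1 hd).1.trans hn2
  calc _ ≤ (∑' x, (2 * S x + 2 * T x) ^ r) ^ (1 / r) :=
        ENNReal.rpow_le_rpow (ENNReal.tsum_le_tsum fun x =>
          ENNReal.rpow_le_rpow (hpt x) hr0.le) (by positivity)
    _ ≤ (4 ^ r * X) ^ (1 / r) :=
        ENNReal.rpow_le_rpow (tsum_two_mul_add_rpow_le hr hSX hTX) (by positivity)
    _ = _ := by
        have h4 : (4 : ℝ≥0∞) = ENNReal.ofReal 4 := by simp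
        rw [hX, h4, ← ENNReal.ofReal_natCast F.card, ← ENNReal.ofReal_mul hH0.le,
          ← ENNReal.ofReal_mul hK0.le, ENNReal.ofReal_rpow_of_pos hW0,
          ENNReal.ofReal_rpow_of_pos (by norm_num), ← ENNReal.ofReal_mul (by positivity),
          ← ENNReal.ofReal_mul (by positivity),
          ENNReal.ofReal_rpow_of_nonneg (by positivity) (by positivity)]
        congr 1
        clear_value W
        rw [← mul_assoc K, Real.mul_rpow (by positivity) (by positivity),
          Real.mul_rpow (by positivity) (by positivity),
          Real.mul_rpow (by positivity) (by positivity), ← Real.rpow_mul (by norm_num),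
          ← Real.rpow_mul hW0.le, mul_one_div_cancel hr0.ne', Real.rpow_one, Real.rpow_one, hW]
        ring

end
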